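/- arXiv:1810.10849 — 3 statements merged into one kernel-verified Lean document; each statement's English description precedes it below -/
import Mathlib

section
/- Let N > 0 and ε ∈ (0,1). Assume (λ_n)_{n∈ℤ^d} ⊂ ℝ^d satisfies |λ_n − n/N| ≤ ε/N for all n ∈ ℤ^d. Then for every f ∈ 𝒫_N (pointwise values via the continuous representative), (Σ_{n∈ℤ^d} |f(λ_n) − f(n/N)|²)^{1/2} ≤ ε π d e^{πd} N^{d/2} ‖f‖. -/
open MeasureTheory Filter Topology Metric ENNReal NNReal

noncomputable section

/-- `sinc` with value 1 at 0. -/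
def sinc' (x : ℝ) : ℝ := if x = 0 then 1 else Real.sin x / x

/-- The function `f_{N,n}(x) = ∏_j sin (π (N x_j - n_j)) / (π (N x_j - n_j))`. -/
def fN (d : ℕ) (N : ℝ) (n : Fin d → ℤ) (x : EuclideanSpace ℝ (Fin d)) : ℝ :=
  ∏ j, sinc' (Real.pi * (N * x j - n j))

/-- The lattice point `n / N` in `ℝ^d`. -/
def latticePt (d : ℕ) (N : ℝ) (n : Fin d → ℤ) : EuclideanSpace ℝ (Fin d) :=
  WithLp.toLp 2 fun j => (n j : ℝ) / N

/-- The heat solution at time `t > 0` with initial datum `u₀ ∈ L²(ℝ^d)`: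
`u(t,x) = (4πt)^{-d/2} ∫ e^{-|x-y|²/(4t)} u₀(y) dy`. -/
def heatSol (d : ℕ) (u₀ : EuclideanSpace ℝ (Fin d) → ℝ) (t : ℝ)
    (x : EuclideanSpace ℝ (Fin d)) : ℝ :=
  (4 * Real.pi * t) ^ (-(d : ℝ) / 2) * ∫ y, Real.exp (-‖x - y‖ ^ 2 / (4 * t)) * u₀ y

/-- The family `F` is summable in `L²(ℝ^d)` with sum `g`: the finite partial sums
converge to `g` in the `L²` norm along the filter of finite subsets of `ℤ^d`. -/
def HasSumL2 (d : ℕ) {V : Type} [NormedAddCommGroup V]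
    (F : (Fin d → ℤ) → EuclideanSpace ℝ (Fin d) → V)
    (g : EuclideanSpace ℝ (Fin d) → V) : Prop :=
  Tendsto (fun s : Finset (Fin d → ℤ) =>
    eLpNorm (fun x => g x - ∑ n ∈ s, F n x) 2 volume) atTop (𝓝 0)

/-- The closed cube `Q_r(0)` in `ℝ^d`, centered at the origin, of side length `2r`. -/
def Qcube (d : ℕ) (r : ℝ) : Set (EuclideanSpace ℝ (Fin d)) := {ξ | ∀ j, |ξ j| ≤ r}

/-- The truncated Fourier integral, with the paper's normalization
`(2π)^{-d/2} ∫_{|x| ≤ R} e^{-i x·ξ} f(x) dx`. -/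
def truncFT (d : ℕ) (f : EuclideanSpace ℝ (Fin d) → ℂ) (R : ℝ)
    (ξ : EuclideanSpace ℝ (Fin d)) : ℂ :=
  (((2 * Real.pi) ^ (-(d : ℝ) / 2) : ℝ) : ℂ) *
    ∫ x in closedBall (0 : EuclideanSpace ℝ (Fin d)) R,
      Complex.exp (-(Complex.I * ((inner ℝ x ξ : ℝ) : ℂ))) * f x

/-- `fhat` is the Fourier transform of `f ∈ L²(ℝ^d)` in the `L²` (Plancherel) sense:
`fhat ∈ L²` and the Fourier integrals of the truncations of `f` converge to `fhat`
in the `L²` norm. -/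
def IsL2Fourier (d : ℕ) (f fhat : EuclideanSpace ℝ (Fin d) → ℂ) : Prop :=
  MemLp fhat 2 volume ∧
    Tendsto (fun R : ℝ => eLpNorm (fun ξ => fhat ξ - truncFT d f R ξ) 2 volume)
      atTop (𝓝 0)

/-- The `L²(ℝ^d)` norm of a function, as a real number. -/
def l2norm (d : ℕ) {V : Type} [NormedAddCommGroup V]
    (f : EuclideanSpace ℝ (Fin d) → V) : ℝ :=
  (eLpNorm f 2 volume).toReal

/-!
By Fourier inversion `f (λ_n) - f (n / N)` equals
`(2π) ^ (-d / 2) ∫_{Q_{πN}} (exp (i δ_n·ξ) - 1) exp (i n·ξ / N) fhat ξ dξ` with `δ_n = λ_n - n / N`.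
Expand the first factor into the powers of `δ_n·ξ = ∑ j, δ_{n,j} ξ_j` and peel them off one at a
time: `ξ_j`, at most `πN` on the cube, is absorbed in `fhat`, and `δ_{n,j}`, at most `ε / N`, comes
out of the integral. What remains are the coefficients of an `L²(Q_{πN})` function against the
orthogonal system `exp (i n·ξ / N)`, whose `ℓ²` norm is controlled by Bessel's inequality. So the
`k`-th Taylor term contributes at most `(πdε) ^ k / k! * N ^ (d / 2) ‖f‖`, and the sum over `k ≥ 1`
is `(exp (πdε) - 1) N ^ (d / 2) ‖f‖`. This is the argument of Duffin and Eachus.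
-/

theorem eLpNorm_two_count {ι E : Type*} [MeasurableSpace ι] [MeasurableSingletonClass ι]
    [NormedAddCommGroup E] (u : ι → E) :
    eLpNorm u 2 Measure.count = (∑' n, (‖u n‖₊ : ℝ≥0∞) ^ 2) ^ ((1 : ℝ) / 2) := by
  simp [eLpNorm_eq_lintegral_rpow_enorm_toReal, lintegral_count, enorm_eq_nnnorm]

theorem eLpNorm_le_tsum_of_ae_hasSum {α E : Type*} [MeasurableSpace α] {μ : Measure α}
    [NormedAddCommGroup E] {p : ℝ≥0∞} (hp : 1 ≤ p) {F : ℕ → α → E} {g : α → E}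
    (hF : ∀ k, AEStronglyMeasurable (F k) μ) (hFg : ∀ᵐ x ∂μ, HasSum (fun k ↦ F k x) (g x)) :
    eLpNorm g p μ ≤ ∑' k, eLpNorm (F k) p μ :=
  Lp.eLpNorm_le_of_ae_tendsto (u := atTop) (f := fun K ↦ ∑ k ∈ Finset.range K, F k)
    (.of_forall fun K ↦ (eLpNorm_sum_le (fun k _ ↦ hF k) hp).trans (ENNReal.sum_le_tsum _))
    (fun K ↦ Finset.aestronglyMeasurable_sum _ fun k _ ↦ hF k)
    (by filter_upwards [hFg] with x hx; simpa using hx.tendsto_sum_nat)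

theorem integrable_of_memLp_of_ae_notMem_eq_zero {α E : Type*} [MeasurableSpace α] {μ : Measure α}
    [NormedAddCommGroup E] {p : ℝ≥0∞} {s : Set α} {h : α → E} (hs : μ s ≠ ⊤) (hp : 1 ≤ p)
    (hh : MemLp h p μ) (hsupp : ∀ᵐ x ∂μ, x ∉ s → h x = 0) : Integrable h μ := by
  have : IsFiniteMeasure (μ.restrict s) := isFiniteMeasure_restrict.2 hs
  exact IntegrableOn.integrable_of_ae_notMem_eq_zero ((hh.restrict s).integrable hp) hsupp

theorem tendsto_eLpNorm_indicator_closedBall_sub {X E : Type*} [PseudoMetricSpace X]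
    [MeasurableSpace X] [OpensMeasurableSpace X] [NormedAddCommGroup E] {μ : Measure X}
    {p : ℝ≥0∞} (hp : p ≠ ⊤) {f : X → E} (hf : MemLp f p μ) (x₀ : X) :
    Tendsto (fun R : ℝ ↦ eLpNorm ((closedBall x₀ R).indicator f - f) p μ) atTop (𝓝 0) := by
  rcases eq_or_ne p 0 with rfl | hp0
  · simp
  have hlim x : Tendsto (fun R ↦ ‖(closedBall x₀ R).indicator f x - f x‖ₑ ^ p.toReal) atTop
      (𝓝 0) := by
    refine tendsto_const_nhds.congr' ?_
    filter_upwards [eventually_ge_atTop (dist x x₀)] with R hR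
    simp [Set.indicator_of_mem (mem_closedBall.2 hR), ENNReal.toReal_pos hp0 hp]
  have hle (R : ℝ) x : ‖(closedBall x₀ R).indicator f x - f x‖ₑ ≤ ‖f x‖ₑ := by
    by_cases hx : x ∈ closedBall x₀ R <;> simp [hx]
  have h := tendsto_lintegral_filter_of_dominated_convergence' (μ := μ)
    (fun x ↦ ‖f x‖ₑ ^ p.toReal)
    (.of_forall fun R ↦ ((hf.1.indicator measurableSet_closedBall).sub hf.1).enorm.pow_const _)
    (.of_forall fun R ↦ .of_forall fun x ↦ by gcongr; exact hle R x)
    (lintegral_rpow_enorm_lt_top_of_eLpNorm_lt_top hp0 hp hf.2).ne (.of_forall hlim)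
  have h' := h.ennrpow_const (1 / p.toReal)
  simpa [eLpNorm_eq_lintegral_rpow_enorm_toReal hp0 hp, ENNReal.toReal_pos hp0 hp] using h'

theorem exp_sub_one_le_mul_exp (x : ℝ) : Real.exp x - 1 ≤ x * Real.exp x := by
  have h := Real.one_sub_le_exp_neg x
  rw [Real.exp_neg, ← one_div, le_div_iff₀ (Real.exp_pos x)] at h
  linarith

theorem exp_pi_mul_sum_sub_one_le (d : ℕ) {ε : ℝ} (hε₀ : 0 ≤ ε) (hε₁ : ε ≤ 1) :
    Real.exp (Real.pi * ∑ _j : Fin d, ε) - 1 ≤ ε * Real.pi * d * Real.exp (Real.pi * d) := by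
  have hle : Real.pi * (d * ε) ≤ Real.pi * d := by
    have := mul_le_of_le_one_right (Nat.cast_nonneg (α := ℝ) d) hε₁
    gcongr
  calc
    _ = Real.exp (Real.pi * (d * ε)) - 1 := by simp
    _ ≤ Real.pi * (d * ε) * Real.exp (Real.pi * (d * ε)) := exp_sub_one_le_mul_exp _
    _ ≤ Real.pi * (d * ε) * Real.exp (Real.pi * d) := by gcongr
    _ = ε * Real.pi * d * Real.exp (Real.pi * d) := by ring

theorem two_pi_rpow_neg_mul_sqrt (d : ℕ) {N : ℝ} (hN : 0 ≤ N) :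
    (2 * Real.pi) ^ (-(d : ℝ) / 2) * √((2 * Real.pi * N) ^ d) = N ^ ((d : ℝ) / 2) := by
  rw [Real.sqrt_eq_rpow, ← Real.rpow_natCast, ← Real.rpow_mul (by positivity),
    Real.mul_rpow (by positivity) hN, ← mul_assoc, ← Real.rpow_add Real.two_pi_pos,
    neg_div, mul_one_div, neg_add_cancel, Real.rpow_zero, one_mul]

theorem hasSum_exp_sub_one {𝕂 : Type*} [RCLike 𝕂] (z : 𝕂) :
    HasSum (fun k : ℕ ↦ ((k + 1).factorial : 𝕂)⁻¹ * z ^ (k + 1)) (NormedSpace.exp z - 1) := by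
  have h := NormedSpace.expSeries_div_hasSum_exp z
  rw [← hasSum_nat_add_iff' 1] at h
  simpa [div_eq_inv_mul] using h

section TaylorExpansion

variable {α : Type*} [MeasurableSpace α] {μ : Measure α} {w u : α → ℂ} {A : ℝ≥0}

theorem integrable_pow_mul (hw : AEStronglyMeasurable w μ) (hwA : ∀ᵐ x ∂μ, ‖w x‖₊ ≤ A)
    (hu : Integrable u μ) (k : ℕ) : Integrable (fun x ↦ w x ^ k * u x) μ := by
  refine hu.bdd_mul (c := (A ^ k : ℝ≥0)) (hw.pow k) ?_
  filter_upwards [hwA] with x hx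
  rw [norm_pow]
  exact_mod_cast pow_le_pow_left' hx k

theorem hasSum_integral_exp_sub_one_mul (hw : AEStronglyMeasurable w μ)
    (hwA : ∀ᵐ x ∂μ, ‖w x‖₊ ≤ A) (hu : Integrable u μ) :
    HasSum (fun k : ℕ ↦ ((k + 1).factorial : ℂ)⁻¹ * ∫ x, w x ^ (k + 1) * u x ∂μ)
      (∫ x, (Complex.exp (w x) - 1) * u x ∂μ) := by
  have hA := hasSum_exp_sub_one (A : ℝ)
  simp_rw [← integral_const_mul]
  refine hasSum_integral_of_dominated_convergence
    (fun k x ↦ ((k + 1).factorial : ℝ)⁻¹ * A ^ (k + 1) * ‖u x‖)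
    (fun k ↦ ((hw.pow _).mul hu.1).const_mul _) (fun k ↦ ?_)
    (.of_forall fun x ↦ hA.summable.mul_right _) ?_ (.of_forall fun x ↦ ?_)
  · filter_upwards [hwA] with x hx
    rw [norm_mul, norm_mul, norm_pow, norm_inv, Complex.norm_natCast, mul_assoc]
    gcongr
    exact hx
  · exact (hu.norm.const_mul _).congr (.of_forall fun _ ↦ tsum_mul_right.symm)
  · simpa [Complex.exp_eq_exp_ℂ, mul_assoc] using (hasSum_exp_sub_one (w x)).mul_right (u x)

end TaylorExpansion

section BesselFamily

variable {α ι κ : Type*} [MeasurableSpace α] [MeasurableSpace ι] {μ : Measure α}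

/-- A Bessel family with bound `C`: functions `e n ∈ L²(μ)` whose analysis operator, which maps
`h ∈ L²(μ)` to the sequence `(∫ e n * h)_n`, has norm at most `C` from `L²(μ)` to `ℓ²(ι)`. The
pairing is bilinear, so for the usual sesquilinear one `e n` is to be read as its conjugate. -/
structure IsBessel (e : ι → α → ℂ) (C : ℝ≥0∞) (μ : Measure α) : Prop where
  memLp : ∀ n, MemLp (e n) 2 μ
  eLpNorm_integral_mul_le : ∀ h, MemLp h 2 μ →
    eLpNorm (fun n ↦ ∫ x, e n x * h x ∂μ) 2 Measure.count ≤ C * eLpNorm h 2 μ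

variable [Countable ι] [MeasurableSingletonClass ι] [Fintype κ] {e : ι → α → ℂ} {C : ℝ≥0∞}
  {g : κ → α → ℂ} {h : α → ℂ} {a b : κ → ℝ≥0} {c : ι → κ → ℂ}

theorem ae_nnnorm_sum_mul_le {v : κ → ℂ} (hgb : ∀ j, ∀ᵐ x ∂μ, ‖g j x‖₊ ≤ b j)
    (hva : ∀ j, ‖v j‖₊ ≤ a j) : ∀ᵐ x ∂μ, ‖∑ j, v j * g j x‖₊ ≤ ∑ j, a j * b j := by
  filter_upwards [eventually_countable_forall.2 hgb] with x hx
  refine nnnorm_sum_le_of_le _ fun j _ ↦ ?_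
  rw [nnnorm_mul]
  exact mul_le_mul' (hva j) (hx j)

theorem integral_pow_succ_sum_mul {v : κ → ℂ} {u : α → ℂ} (hu : Integrable u μ)
    (hg : ∀ j, AEStronglyMeasurable (g j) μ) (hgb : ∀ j, ∀ᵐ x ∂μ, ‖g j x‖₊ ≤ b j) (k : ℕ) :
    ∫ x, (∑ j, v j * g j x) ^ (k + 1) * u x ∂μ =
      ∑ j, v j * ∫ x, (∑ j, v j * g j x) ^ k * (g j x * u x) ∂μ := by
  have hw : AEStronglyMeasurable (fun x ↦ ∑ j, v j * g j x) μ :=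
    Finset.aestronglyMeasurable_fun_sum _ fun j _ ↦ (hg j).const_mul _
  have hwA := ae_nnnorm_sum_mul_le hgb fun j ↦ le_refl ‖v j‖₊
  simp_rw [← integral_const_mul]
  rw [← integral_finsetSum]
  · congr with x
    rw [pow_succ, mul_assoc, Finset.sum_mul, Finset.mul_sum]
    exact Finset.sum_congr rfl fun j _ ↦ by ring
  · exact fun j _ ↦ (integrable_pow_mul hw hwA (hu.bdd_mul (hg j) (hgb j)) k).const_mul _

theorem IsBessel.eLpNorm_integral_pow_mul_le (he : IsBessel e C μ)
    (hg : ∀ j, AEStronglyMeasurable (g j) μ) (hgb : ∀ j, ∀ᵐ x ∂μ, ‖g j x‖₊ ≤ b j)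
    (hca : ∀ n j, ‖c n j‖₊ ≤ a j) (k : ℕ) (hh : MemLp h 2 μ) :
    eLpNorm (fun n ↦ ∫ x, (∑ j, c n j * g j x) ^ k * (e n x * h x) ∂μ) 2 Measure.count ≤
      ((∑ j, a j * b j) ^ k : ℝ≥0) * (C * eLpNorm h 2 μ) := by
  induction k generalizing h with
  | zero => simpa using he.eLpNorm_integral_mul_le h hh
  | succ k ih =>
    have hgh_le j : ∀ᵐ x ∂μ, ‖g j x * h x‖₊ ≤ b j * ‖h x‖₊ := by
      filter_upwards [hgb j] with x hx
      rw [nnnorm_mul]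
      gcongr
    have hgh j : MemLp (fun x ↦ g j x * h x) 2 μ := hh.of_le_mul ((hg j).mul hh.1) (hgh_le j)
    have heh n : Integrable (fun x ↦ e n x * h x) μ := (he.memLp n).integrable_mul hh
    let T j n := ∫ x, (∑ j, c n j * g j x) ^ k * (e n x * (g j x * h x)) ∂μ
    calc
      _ = eLpNorm (∑ j, fun n ↦ c n j * T j n) 2 Measure.count := by
        congr with n
        simp only [integral_pow_succ_sum_mul (heh n) hg hgb,
          Finset.sum_apply, T, mul_left_comm (e n _)]
      _ ≤ ∑ j, eLpNorm (fun n ↦ c n j * T j n) 2 Measure.count :=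
        eLpNorm_sum_le (fun _ _ ↦ .of_discrete) one_le_two
      _ ≤ ∑ j, a j * eLpNorm (T j) 2 Measure.count := by
        refine Finset.sum_le_sum fun j _ ↦
          eLpNorm_le_nnreal_smul_eLpNorm_of_ae_le_mul (.of_forall fun n ↦ ?_) 2
        rw [nnnorm_mul]
        gcongr
        exact hca n j
      _ ≤ ∑ j, a j * (((∑ j, a j * b j) ^ k : ℝ≥0) * (C * (b j * eLpNorm h 2 μ))) := by
        gcongr with j
        refine (ih (hgh j)).trans ?_
        gcongr
        exact eLpNorm_le_nnreal_smul_eLpNorm_of_ae_le_mul (hgh_le j) 2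
      _ = _ := by
        rw [pow_succ, mul_comm _ (∑ j, _)]
        push_cast
        simp only [Finset.sum_mul]
        exact Finset.sum_congr rfl fun j _ ↦ by ring

theorem IsBessel.eLpNorm_integral_exp_sub_one_mul_le (he : IsBessel e C μ)
    (hg : ∀ j, AEStronglyMeasurable (g j) μ) (hgb : ∀ j, ∀ᵐ x ∂μ, ‖g j x‖₊ ≤ b j)
    (hca : ∀ n j, ‖c n j‖₊ ≤ a j) (hh : MemLp h 2 μ) :
    eLpNorm (fun n ↦ ∫ x, (Complex.exp (∑ j, c n j * g j x) - 1) * (e n x * h x) ∂μ)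
        2 Measure.count ≤
      ENNReal.ofReal (Real.exp ↑(∑ j, a j * b j) - 1) * (C * eLpNorm h 2 μ) := by
  set A : ℝ≥0 := ∑ j, a j * b j
  have hA := hasSum_exp_sub_one (A : ℝ)
  let T (k : ℕ) n := ∫ x, (∑ j, c n j * g j x) ^ (k + 1) * (e n x * h x) ∂μ
  have hT n : HasSum (fun k : ℕ ↦ ((k + 1).factorial : ℂ)⁻¹ * T k n)
      (∫ x, (Complex.exp (∑ j, c n j * g j x) - 1) * (e n x * h x) ∂μ) :=
    hasSum_integral_exp_sub_one_mul
      (Finset.aestronglyMeasurable_fun_sum _ fun j _ ↦ (hg j).const_mul _)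
      (ae_nnnorm_sum_mul_le hgb (hca n)) ((he.memLp n).integrable_mul hh)
  calc
    _ ≤ ∑' k : ℕ, eLpNorm (((k + 1).factorial : ℂ)⁻¹ • T k) 2 Measure.count :=
      eLpNorm_le_tsum_of_ae_hasSum one_le_two (fun _ ↦ .of_discrete) (.of_forall hT)
    _ ≤ ∑' k : ℕ, ENNReal.ofReal (((k + 1).factorial : ℝ)⁻¹ * A ^ (k + 1)) *
        (C * eLpNorm h 2 μ) := by
      gcongr with k
      rw [eLpNorm_const_smul, ENNReal.ofReal_mul (by positivity), mul_assoc]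
      gcongr
      · rw [← ofReal_norm, norm_inv, Complex.norm_natCast]
      · rw [← NNReal.coe_pow, ENNReal.ofReal_coe_nnreal]
        exact he.eLpNorm_integral_pow_mul_le hg hgb hca (k + 1) hh
    _ = _ := by
      rw [ENNReal.tsum_mul_right, ← ENNReal.ofReal_tsum_of_nonneg (fun _ ↦ by positivity)
        hA.summable, hA.tsum_eq, Real.exp_eq_exp_ℝ]

end BesselFamily

section BesselInequality

theorem eLpNorm_inner_le_of_orthonormal {𝕜 E ι : Type*} [RCLike 𝕜] [NormedAddCommGroup E]
    [InnerProductSpace 𝕜 E] [MeasurableSpace ι] [MeasurableSingletonClass ι] {v : ι → E}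
    (hv : Orthonormal 𝕜 v) (x : E) :
    eLpNorm (fun n ↦ inner 𝕜 (v n) x) 2 Measure.count ≤ ‖x‖ₑ := by
  rw [eLpNorm_two_count, one_div, ENNReal.rpow_inv_le_iff two_pos, ENNReal.tsum_eq_iSup_sum]
  refine iSup_le fun s ↦ ?_
  rw [ENNReal.rpow_ofNat, enorm_eq_nnnorm]
  norm_cast
  rw [← NNReal.coe_le_coe]
  push_cast
  exact hv.sum_inner_products_le x

theorem inner_toLp_star_toLp {α : Type*} [MeasurableSpace α] {μ : Measure α} {u v : α → ℂ}
    (hu : MemLp u 2 μ) (hv : MemLp v 2 μ) :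
    inner ℂ (hu.star.toLp (star u)) (hv.toLp v) = ∫ x, u x * v x ∂μ := by
  rw [L2.inner_def]
  refine integral_congr_ae ?_
  filter_upwards [hu.star.coeFn_toLp, hv.coeFn_toLp] with x hux hvx
  simp [hux, hvx, mul_comm]

theorem IsBessel.of_integral_mul_conj_eq_ite {α ι : Type*} [MeasurableSpace α]
    [MeasurableSpace ι] [MeasurableSingletonClass ι] [DecidableEq ι] {μ : Measure α}
    {e : ι → α → ℂ} {A : ℝ} (hA : 0 < A) (he : ∀ n, MemLp (e n) 2 μ)
    (horth : ∀ n m, ∫ x, e n x * starRingEnd ℂ (e m x) ∂μ = if n = m then (A : ℂ) else 0) :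
    IsBessel e (ENNReal.ofReal √A) μ := by
  have hsqrt : ((√A : ℝ) : ℂ) ≠ 0 := by exact_mod_cast (Real.sqrt_pos.2 hA).ne'
  let v n : Lp ℂ 2 μ := ((√A : ℝ) : ℂ)⁻¹ • (he n).star.toLp (star (e n))
  have hv : Orthonormal ℂ v := by
    rw [orthonormal_iff_ite]
    intro n m
    rw [inner_smul_left, inner_smul_right, inner_toLp_star_toLp (he n) (he m).star]
    simp only [Pi.star_apply, ← starRingEnd_apply, horth]
    rw [map_inv₀, Complex.conj_ofReal, ← mul_assoc, ← mul_inv, ← Complex.ofReal_mul,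
      Real.mul_self_sqrt hA.le, mul_ite, mul_zero, inv_mul_cancel₀ (by exact_mod_cast hA.ne')]
  refine ⟨he, fun h hh ↦ ?_⟩
  have hint n : ∫ x, e n x * h x ∂μ = √A * inner ℂ (v n) (hh.toLp h) := by
    rw [inner_smul_left, map_inv₀, Complex.conj_ofReal, mul_inv_cancel_left₀ hsqrt,
      inner_toLp_star_toLp (he n) hh]
  calc
    _ = eLpNorm (((√A : ℝ) : ℂ) • fun n ↦ inner ℂ (v n) (hh.toLp h)) 2 Measure.count := by
      simp only [hint]
      rfl
    _ ≤ ENNReal.ofReal √A * ‖hh.toLp h‖ₑ := by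
      rw [eLpNorm_const_smul, ← ofReal_norm, Complex.norm_real,
        Real.norm_of_nonneg (Real.sqrt_nonneg A)]
      gcongr
      exact eLpNorm_inner_le_of_orthonormal hv _
    _ = _ := by rw [Lp.enorm_toLp]

end BesselInequality

section Cube

variable {d : ℕ}

theorem toLp_preimage_Qcube (r : ℝ) :
    WithLp.toLp 2 ⁻¹' Qcube d r = Set.univ.pi fun _ ↦ Set.Icc (-r) r := by
  ext ξ
  simp only [Qcube, abs_le, Set.mem_preimage, Set.mem_ofPred_eq, Set.mem_univ_pi, Set.mem_Icc]

theorem isCompact_Qcube (r : ℝ) : IsCompact (Qcube d r) := by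
  have h := (isCompact_univ_pi fun _ : Fin d ↦ isCompact_Icc (a := -r) (b := r)).image
    (PiLp.continuous_toLp 2 fun _ ↦ ℝ)
  rwa [← toLp_preimage_Qcube, Set.image_preimage_eq _ (WithLp.toLp_surjective 2)] at h

theorem setIntegral_Qcube_prod (r : ℝ) (φ : Fin d → ℝ → ℂ) :
    ∫ ξ in Qcube d r, ∏ j, φ j (ξ j) = ∏ j, ∫ t in Set.Icc (-r) r, φ j t := by
  rw [← (PiLp.volume_preserving_toLp (Fin d)).setIntegral_preimage_emb
    (MeasurableEquiv.toLp 2 (Fin d → ℝ)).measurableEmbedding, toLp_preimage_Qcube, volume_pi,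
    Measure.restrict_pi_pi, integral_fintype_prod_eq_prod (𝕜 := ℂ) φ]

theorem integral_Icc_exp_int_mul_div {N : ℝ} (hN : 0 < N) (k : ℤ) :
    ∫ t in Set.Icc (-(Real.pi * N)) (Real.pi * N), Complex.exp (Complex.I * (k / N * t : ℝ)) =
      if k = 0 then ((2 * Real.pi * N : ℝ) : ℂ) else 0 := by
  have hπN : 0 < Real.pi * N := by positivity
  rw [integral_Icc_eq_integral_Ioc, ← intervalIntegral.integral_of_le (by linarith)]
  split_ifs with hk
  · simp only [hk, Int.cast_zero, zero_div, zero_mul, Complex.ofReal_zero, mul_zero,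
      Complex.exp_zero, intervalIntegral.integral_const, sub_neg_eq_add, Complex.real_smul, mul_one]
    ring_nf
  · have hN' : (N : ℂ) ≠ 0 := by exact_mod_cast hN.ne'
    have hc : Complex.I * (k / N : ℂ) ≠ 0 := by simp [hk, hN']
    simp only [Complex.ofReal_mul, Complex.ofReal_div, Complex.ofReal_intCast, ← mul_assoc]
    rw [integral_exp_mul_complex hc, _root_.div_eq_zero_iff, sub_eq_zero,
      Complex.exp_eq_exp_iff_exists_int]
    refine .inl ⟨k, ?_⟩
    push_cast
    field_simp
    ring

/-- The character `ξ ↦ exp (i x·ξ)` of `ℝ^d` with frequency `x`. -/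
def expInner (x ξ : EuclideanSpace ℝ (Fin d)) : ℂ := Complex.exp (Complex.I * (inner ℝ x ξ : ℝ))

theorem continuous_expInner (x : EuclideanSpace ℝ (Fin d)) : Continuous (expInner x) := by
  unfold expInner
  fun_prop

theorem norm_expInner (x ξ : EuclideanSpace ℝ (Fin d)) : ‖expInner x ξ‖ = 1 :=
  Complex.norm_exp_I_mul_ofReal _

theorem expInner_eq_prod (x ξ : EuclideanSpace ℝ (Fin d)) :
    expInner x ξ = ∏ j, Complex.exp (Complex.I * (x j * ξ j : ℝ)) := by
  rw [expInner, ← Complex.exp_sum, ← Finset.mul_sum, ← Complex.ofReal_sum]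
  simp only [PiLp.inner_apply, RCLike.inner_apply, conj_trivial, mul_comm]

theorem expInner_add (x y ξ : EuclideanSpace ℝ (Fin d)) :
    expInner (x + y) ξ = expInner x ξ * expInner y ξ := by
  simp only [expInner, inner_add_left, Complex.ofReal_add, mul_add, Complex.exp_add]

theorem conj_expInner (x ξ : EuclideanSpace ℝ (Fin d)) :
    starRingEnd ℂ (expInner x ξ) = expInner (-x) ξ := by
  simp [expInner, ← Complex.exp_conj]

theorem setIntegral_Qcube_expInner_latticePt {N : ℝ} (hN : 0 < N) (k : Fin d → ℤ) :
    ∫ ξ in Qcube d (Real.pi * N), expInner (latticePt d N k) ξ =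
      if k = 0 then (((2 * Real.pi * N) ^ d : ℝ) : ℂ) else 0 := by
  simp_rw [expInner_eq_prod, latticePt]
  rw [setIntegral_Qcube_prod _ fun j t ↦ Complex.exp (Complex.I * (k j / N * t : ℝ))]
  simp_rw [integral_Icc_exp_int_mul_div hN]
  split_ifs with hk
  · simp [hk]
  · obtain ⟨j, hj⟩ := Function.ne_iff.1 hk
    exact Finset.prod_eq_zero (Finset.mem_univ j) (if_neg hj)

theorem isBessel_expInner_latticePt {N : ℝ} (hN : 0 < N) :
    IsBessel (fun n ↦ expInner (latticePt d N n)) (ENNReal.ofReal √((2 * Real.pi * N) ^ d))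
      (volume.restrict (Qcube d (Real.pi * N))) := by
  have : IsFiniteMeasure (volume.restrict (Qcube d (Real.pi * N))) :=
    isFiniteMeasure_restrict.2 (isCompact_Qcube _).measure_ne_top
  refine .of_integral_mul_conj_eq_ite (by positivity) (fun n ↦ ?_) fun n m ↦ ?_
  · exact .of_bound (continuous_expInner _).aestronglyMeasurable 1
      (.of_forall fun ξ ↦ (norm_expInner _ ξ).le)
  · have hsub : latticePt d N n + -latticePt d N m = latticePt d N (n - m) := by
      ext j
      simp [latticePt, _root_.sub_div, ← sub_eq_add_neg]
    simp_rw [conj_expInner, ← expInner_add, hsub, setIntegral_Qcube_expInner_latticePt hN,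
      sub_eq_zero]

end Cube

section FourierL2

open FourierTransform SchwartzMap

theorem ae_eq_of_integral_schwartzMap_smul_eq {V F : Type*} [NormedAddCommGroup V]
    [NormedSpace ℝ V] [FiniteDimensional ℝ V] [MeasurableSpace V] [BorelSpace V]
    [NormedAddCommGroup F] [NormedSpace ℂ F] [CompleteSpace F] {μ : Measure V} {u v : V → F}
    (hu : LocallyIntegrable u μ) (hv : LocallyIntegrable v μ)
    (h : ∀ φ : 𝓢(V, ℂ), ∫ x, φ x • u x ∂μ = ∫ x, φ x • v x ∂μ) : u =ᵐ[μ] v := by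
  refine ae_eq_of_integral_contDiff_smul_eq hu hv fun g hg hgc ↦ ?_
  have hg' : ContDiff ℝ (⊤ : ℕ∞) (Complex.ofRealCLM ∘ g) := by fun_prop
  have hgc' : HasCompactSupport (Complex.ofRealCLM ∘ g) := hgc.comp_left rfl
  simpa using h (hgc'.toSchwartzMap hg')

variable {V F : Type*} [NormedAddCommGroup V] [InnerProductSpace ℝ V] [FiniteDimensional ℝ V]
  [MeasurableSpace V] [BorelSpace V] [NormedAddCommGroup F]

theorem continuous_fourier_of_integrable [NormedSpace ℂ F] {u : V → F} (hu : Integrable u) :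
    Continuous (𝓕 u) :=
  VectorFourier.fourierIntegral_continuous Real.continuous_fourierChar
    (by simpa using continuous_inner) hu

theorem continuous_fourierInv_of_integrable [NormedSpace ℂ F] {u : V → F} (hu : Integrable u) :
    Continuous (𝓕⁻ u) := by
  rw [Real.fourierInv_eq_fourier_comp_neg]
  exact continuous_fourier_of_integrable hu.comp_neg

theorem integral_schwartzMap_smul_fourier [NormedSpace ℂ F] [CompleteSpace F] (φ : 𝓢(V, ℂ))
    {u : V → F} (hu : Integrable u) : ∫ x, φ x • 𝓕 u x = ∫ x, 𝓕 φ x • u x := by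
  have h := VectorFourier.integral_fourierIntegral_smul_eq_flip (L := innerₗ V) (f := φ) (g := u)
    (μ := volume) (ν := volume) Real.continuous_fourierChar (by simpa using continuous_inner)
    φ.integrable hu
  rw [flip_innerₗ] at h
  exact h.symm

theorem integral_schwartzMap_smul_fourierInv [NormedSpace ℂ F] [CompleteSpace F] (φ : 𝓢(V, ℂ))
    {u : V → F} (hu : Integrable u) : ∫ x, φ x • 𝓕⁻ u x = ∫ x, 𝓕⁻ φ x • u x := by
  rw [Real.fourierInv_eq_fourier_comp_neg, integral_schwartzMap_smul_fourier φ hu.comp_neg,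
    ← integral_neg_eq_self]
  simp only [neg_neg, SchwartzMap.fourier_coe, SchwartzMap.fourierInv_coe,
    Real.fourierInv_eq_fourier_neg]

variable [InnerProductSpace ℂ F] [CompleteSpace F]

theorem fourier_toLp_ae_eq {u : V → F} (hu : Integrable u) (hu2 : MemLp u 2) :
    (𝓕 (hu2.toLp u) : Lp F 2 (volume : Measure V)) =ᵐ[volume] 𝓕 u := by
  refine ae_eq_of_integral_schwartzMap_smul_eq ((Lp.memLp _).locallyIntegrable one_le_two)
    (continuous_fourier_of_integrable hu).locallyIntegrable fun φ ↦ ?_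
  rw [integral_schwartzMap_smul_fourier φ hu, ← Lp.toTemperedDistribution_apply,
    ← Lp.fourier_toTemperedDistribution_eq, TemperedDistribution.fourier_apply,
    Lp.toTemperedDistribution_apply]
  refine integral_congr_ae ?_
  filter_upwards [hu2.coeFn_toLp] with x hx
  rw [hx]

theorem fourierInv_toLp_ae_eq {u : V → F} (hu : Integrable u) (hu2 : MemLp u 2) :
    (𝓕⁻ (hu2.toLp u) : Lp F 2 (volume : Measure V)) =ᵐ[volume] 𝓕⁻ u := by
  refine ae_eq_of_integral_schwartzMap_smul_eq ((Lp.memLp _).locallyIntegrable one_le_two)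
    (continuous_fourierInv_of_integrable hu).locallyIntegrable fun φ ↦ ?_
  rw [integral_schwartzMap_smul_fourierInv φ hu, ← Lp.toTemperedDistribution_apply,
    ← Lp.fourierInv_toTemperedDistribution_eq, TemperedDistribution.fourierInv_apply,
    Lp.toTemperedDistribution_apply]
  refine integral_congr_ae ?_
  filter_upwards [hu2.coeFn_toLp] with x hx
  rw [hx]

theorem eq_fourierInv_of_fourier_toLp_ae_eq {f g : V → F} (hf : Continuous f) (hf2 : MemLp f 2)
    (hg : Integrable g) (hfg : (𝓕 (hf2.toLp f) : Lp F 2 (volume : Measure V)) =ᵐ[volume] g) :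
    f = 𝓕⁻ g := by
  have hg2 : MemLp g 2 := (memLp_congr_ae hfg).1 (Lp.memLp _)
  have hfg' : hg2.toLp g = 𝓕 (hf2.toLp f) := Lp.ext (hg2.coeFn_toLp.trans hfg.symm)
  have h := fourierInv_toLp_ae_eq hg hg2
  rw [hfg', fourierInv_fourier_eq] at h
  exact (hf.ae_eq_iff_eq volume (continuous_fourierInv_of_integrable hg)).1
    (hf2.coeFn_toLp.symm.trans h)

end FourierL2

section Dilation

variable {V F : Type*} [NormedAddCommGroup V] [NormedSpace ℝ V] [NormedAddCommGroup F]
  [NormedSpace ℝ F]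

/-- The `L²`-normalized dilation `x ↦ r ^ (dim V / 2) • h (r • x)` of `h`. For `r = 2π` it turns
the Fourier transform with kernel `(2π) ^ (-d / 2) e^{-i x·ξ}` into Mathlib's, whose kernel is
`e^{-2πi x·ξ}`. -/
def dilation (r : ℝ) (h : V → F) (x : V) : F :=
  r ^ ((Module.finrank ℝ V : ℝ) / 2) • h (r • x)

variable [FiniteDimensional ℝ V] [MeasurableSpace V] [BorelSpace V] {μ : Measure V}
  [μ.IsAddHaarMeasure] {r : ℝ}

theorem eLpNorm_dilation (hr : 0 < r) (h : V → F) :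
    eLpNorm (dilation r h) 2 μ = eLpNorm h 2 μ := by
  have hmap := (measurableEmbedding_const_smul₀ (α := V) hr.ne').eLpNorm_map_measure
    (μ := μ) (g := h) (p := 2)
  have hrn : 0 < r ^ Module.finrank ℝ V := by positivity
  rw [Measure.map_addHaar_smul _ hr.ne', eLpNorm_smul_measure_of_ne_top (by simp)] at hmap
  have hdil : dilation r h = r ^ ((Module.finrank ℝ V : ℝ) / 2) • h ∘ (r • ·) := rfl
  rw [hdil, eLpNorm_const_smul, ← hmap, smul_eq_mul, ← mul_assoc,
    Real.enorm_of_nonneg (by positivity), ENNReal.ofReal_rpow_of_nonneg (abs_nonneg _) (by simp),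
    ← ENNReal.ofReal_mul (by positivity), abs_of_pos (inv_pos.2 hrn), Real.inv_rpow hrn.le,
    ← Real.rpow_natCast, ← Real.rpow_mul hr.le]
  simp [div_eq_mul_inv, (Real.rpow_pos_of_pos hr _).ne']

theorem memLp_dilation (hr : 0 < r) {h : V → F} (hh : MemLp h 2 μ) : MemLp (dilation r h) 2 μ := by
  refine ⟨(hh.1.comp_quasiMeasurePreserving ⟨measurable_const_smul r, ?_⟩).const_smul _, ?_⟩
  · rw [Measure.map_addHaar_smul _ hr.ne']
    exact Measure.smul_absolutelyContinuous
  · rw [eLpNorm_dilation hr]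
    exact hh.2

theorem integrable_dilation (hr : r ≠ 0) {h : V → F} (hh : Integrable h μ) :
    Integrable (dilation r h) μ :=
  ((integrable_comp_smul_iff μ h hr).2 hh).smul _

end Dilation

section IsL2Fourier

open FourierTransform

variable {d : ℕ} {f fhat : EuclideanSpace ℝ (Fin d) → ℂ}

theorem integrable_indicator_closedBall (hf : MemLp f 2) (R : ℝ) :
    Integrable ((closedBall 0 R).indicator f) :=
  (integrable_indicator_iff measurableSet_closedBall).2
    ((hf.locallyIntegrable one_le_two).integrableOn_isCompact (isCompact_closedBall _ _))

theorem dilation_truncFT (f : EuclideanSpace ℝ (Fin d) → ℂ) (R : ℝ) :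
    dilation (2 * Real.pi) (truncFT d f R) = 𝓕 ((closedBall 0 R).indicator f) := by
  ext ξ
  rw [dilation, truncFT, Complex.real_smul, ← mul_assoc, ← Complex.ofReal_mul,
    ← Real.rpow_add (by positivity), finrank_euclideanSpace_fin, neg_div, add_neg_cancel,
    Real.rpow_zero, Complex.ofReal_one, one_mul, Real.fourier_eq',
    ← integral_indicator measurableSet_closedBall]
  congr with x
  by_cases hx : x ∈ closedBall (0 : EuclideanSpace ℝ (Fin d)) R
  · rw [Set.indicator_of_mem hx, Set.indicator_of_mem hx, smul_eq_mul, inner_smul_right]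
    push_cast
    ring_nf
  · simp [hx]

theorem IsL2Fourier.fourier_toLp_ae_eq_dilation (h : IsL2Fourier d f fhat) (hf : MemLp f 2) :
    (𝓕 (hf.toLp f) : Lp ℂ 2 (volume : Measure (EuclideanSpace ℝ (Fin d)))) =ᵐ[volume]
      dilation (2 * Real.pi) fhat := by
  have hfR (R : ℝ) : MemLp ((closedBall 0 R).indicator f) 2 := hf.indicator measurableSet_closedBall
  have hG := memLp_dilation (μ := volume) Real.two_pi_pos h.1
  have hlim : Tendsto (fun R ↦ 𝓕 ((hfR R).toLp _)) atTop (𝓝 (𝓕 (hf.toLp f))) :=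
    (FourierTransform.continuous_fourier.tendsto _).comp <|
      (Lp.tendsto_Lp_iff_tendsto_eLpNorm'' _ hfR _ hf).2 <|
        tendsto_eLpNorm_indicator_closedBall_sub ENNReal.ofNat_ne_top hf 0
  have hlim' : Tendsto (fun R ↦ 𝓕 ((hfR R).toLp _)) atTop (𝓝 (hG.toLp _)) := by
    refine (Lp.tendsto_Lp_iff_tendsto_eLpNorm _ _ hG).2 <| h.2.congr fun R ↦ ?_
    have htrunc := fourier_toLp_ae_eq (integrable_indicator_closedBall hf R) (hfR R)
    rw [eLpNorm_congr_ae (htrunc.sub .rfl), ← dilation_truncFT, eLpNorm_sub_comm,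
      ← eLpNorm_dilation Real.two_pi_pos]
    congr with ξ
    exact smul_sub _ _ _
  rw [tendsto_nhds_unique hlim hlim']
  exact hG.coeFn_toLp

theorem IsL2Fourier.eLpNorm_eq (h : IsL2Fourier d f fhat) (hf : MemLp f 2) :
    eLpNorm fhat 2 volume = eLpNorm f 2 volume := by
  rw [← eLpNorm_dilation Real.two_pi_pos, ← eLpNorm_congr_ae (h.fourier_toLp_ae_eq_dilation hf),
    ← Lp.enorm_def, ← Lp.enorm_toLp hf, ← ofReal_norm, ← ofReal_norm, Lp.norm_fourier_eq]

theorem IsL2Fourier.eq_integral_expInner_mul (h : IsL2Fourier d f fhat) (hf : Continuous f)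
    (hf2 : MemLp f 2) (hfhat : Integrable fhat) (x : EuclideanSpace ℝ (Fin d)) :
    f x = ((2 * Real.pi) ^ (-(d : ℝ) / 2) : ℝ) * ∫ ξ, expInner x ξ * fhat ξ := by
  rw [eq_fourierInv_of_fourier_toLp_ae_eq hf hf2
    (integrable_dilation Real.two_pi_pos.ne' hfhat) (h.fourier_toLp_ae_eq_dilation hf2),
    Real.fourierInv_eq']
  have hpi : (0 : ℝ) < 2 * Real.pi := Real.two_pi_pos
  have hconst : (2 * Real.pi) ^ ((d : ℝ) / 2) =
      (2 * Real.pi) ^ (-(d : ℝ) / 2) * (2 * Real.pi) ^ d := by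
    rw [← Real.rpow_natCast, ← Real.rpow_add hpi]
    ring_nf
  have hdil ξ : Complex.exp (↑(2 * Real.pi * inner ℝ ξ x) * Complex.I) •
      dilation (2 * Real.pi) fhat ξ = ((2 * Real.pi) ^ ((d : ℝ) / 2) : ℝ) *
        (expInner x ((2 * Real.pi) • ξ) * fhat ((2 * Real.pi) • ξ)) := by
    rw [dilation, expInner, inner_smul_right, real_inner_comm, finrank_euclideanSpace_fin,
      smul_eq_mul, Complex.real_smul, mul_left_comm, mul_comm Complex.I]
  simp_rw [hdil]
  rw [integral_const_mul,
    Measure.integral_comp_smul volume (fun ξ ↦ expInner x ξ * fhat ξ), hconst,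
    finrank_euclideanSpace_fin, abs_of_pos (by positivity), Complex.real_smul, ← mul_assoc,
    ← Complex.ofReal_mul, mul_inv_cancel_right₀ (by positivity)]

end IsL2Fourier

section Bandlimited

variable {d : ℕ} {f fhat : EuclideanSpace ℝ (Fin d) → ℂ}

theorem IsL2Fourier.sub_eq_setIntegral {s : Set (EuclideanSpace ℝ (Fin d))}
    (h : IsL2Fourier d f fhat) (hf : Continuous f) (hf2 : MemLp f 2) (hs : volume s ≠ ⊤)
    (hsupp : ∀ᵐ ξ, ξ ∉ s → fhat ξ = 0) (x y : EuclideanSpace ℝ (Fin d)) :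
    f y - f x = ((2 * Real.pi) ^ (-(d : ℝ) / 2) : ℝ) *
      ∫ ξ in s, (Complex.exp (∑ j, Complex.I * (y j - x j : ℝ) * (ξ j : ℂ)) - 1) *
        (expInner x ξ * fhat ξ) := by
  have hint := integrable_of_memLp_of_ae_notMem_eq_zero hs one_le_two h.1 hsupp
  have hmul z : Integrable fun ξ ↦ expInner z ξ * fhat ξ :=
    hint.bdd_mul (c := 1) (continuous_expInner z).aestronglyMeasurable
      (.of_forall fun ξ ↦ (norm_expInner z ξ).le)
  rw [setIntegral_eq_integral_of_ae_compl_eq_zero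
      (by filter_upwards [hsupp] with ξ hξ hξs; simp [hξ hξs]),
    h.eq_integral_expInner_mul hf hf2 hint, h.eq_integral_expInner_mul hf hf2 hint x,
    ← mul_sub, ← integral_sub (hmul y) (hmul x)]
  congr with ξ
  have hexp : expInner (y - x) ξ =
      Complex.exp (∑ j, Complex.I * (y j - x j : ℝ) * (ξ j : ℂ)) := by
    rw [expInner_eq_prod, ← Complex.exp_sum]
    simp only [PiLp.sub_apply, Complex.ofReal_mul, mul_assoc]
  rw [← sub_add_cancel y x, expInner_add, sub_add_cancel, hexp]
  ring

theorem IsL2Fourier.eLpNorm_sub_le_of_isBessel {ι : Type*} [Countable ι] [MeasurableSpace ι]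
    [MeasurableSingletonClass ι] {s : Set (EuclideanSpace ℝ (Fin d))}
    {x y : ι → EuclideanSpace ℝ (Fin d)} {C : ℝ≥0∞} {a b : Fin d → ℝ≥0}
    (h : IsL2Fourier d f fhat) (hf : Continuous f) (hf2 : MemLp f 2) (hs : volume s ≠ ⊤)
    (hsupp : ∀ᵐ ξ, ξ ∉ s → fhat ξ = 0)
    (hx : IsBessel (fun n ↦ expInner (x n)) C (volume.restrict s))
    (hsb : ∀ j, ∀ᵐ ξ ∂volume.restrict s, ‖ξ j‖₊ ≤ b j) (hxy : ∀ n j, ‖y n j - x n j‖₊ ≤ a j) :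
    eLpNorm (fun n ↦ f (y n) - f (x n)) 2 Measure.count ≤
      ENNReal.ofReal ((2 * Real.pi) ^ (-(d : ℝ) / 2)) *
        (ENNReal.ofReal (Real.exp ↑(∑ j, a j * b j) - 1) * (C * eLpNorm f 2 volume)) := by
  have hc n j : ‖Complex.I * (y n j - x n j : ℝ)‖₊ ≤ a j := by
    rw [nnnorm_mul, Complex.nnnorm_I, one_mul, Complex.nnnorm_real]
    exact hxy n j
  have hbessel := hx.eLpNorm_integral_exp_sub_one_mul_le (g := fun j ξ ↦ (ξ j : ℂ))
    (fun j ↦ Continuous.aestronglyMeasurable (by fun_prop))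
    (fun j ↦ by simpa only [Complex.nnnorm_real] using hsb j) hc (h.1.restrict s)
  simp_rw [h.sub_eq_setIntegral hf hf2 hs hsupp, ← smul_eq_mul (α := ℂ)]
  refine (eLpNorm_const_smul_le (c := (((2 * Real.pi) ^ (-(d : ℝ) / 2) : ℝ) : ℂ))).trans ?_
  rw [← ofReal_norm, Complex.norm_real, Real.norm_of_nonneg (by positivity)]
  gcongr
  refine hbessel.trans ?_
  gcongr
  exact (eLpNorm_restrict_le _ _ _ _).trans_eq (h.eLpNorm_eq hf2)

end Bandlimited

theorem statement11_general (d : ℕ) (N : ℝ) (hN : 0 < N) (ε : Fin d → ℝ)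
    (lam : (Fin d → ℤ) → EuclideanSpace ℝ (Fin d))
    (hlam : ∀ n j, |lam n j - latticePt d N n j| ≤ ε j / N)
    (f fhat : EuclideanSpace ℝ (Fin d) → ℂ)
    (hf : Continuous f) (hfm : MemLp f 2 volume) (hFT : IsL2Fourier d f fhat)
    (hsupp : ∀ᵐ ξ ∂(volume : Measure (EuclideanSpace ℝ (Fin d))),
      ξ ∉ Qcube d (Real.pi * N) → fhat ξ = 0) :
    (∑' n : Fin d → ℤ, (‖f (lam n) - f (latticePt d N n)‖₊ : ℝ≥0∞) ^ 2) ^ ((1 : ℝ) / 2)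
      ≤ ENNReal.ofReal
          ((Real.exp (Real.pi * ∑ j, ε j) - 1) * N ^ ((d : ℝ) / 2) * l2norm d f) := by
  have hε j : 0 ≤ ε j / N := (abs_nonneg _).trans (hlam 0 j)
  have hπN : 0 ≤ Real.pi * N := by positivity
  have hab : ((∑ j, (ε j / N).toNNReal * (Real.pi * N).toNNReal : ℝ≥0) : ℝ) =
      Real.pi * ∑ j, ε j := by
    push_cast
    rw [← Finset.sum_mul, Finset.sum_congr rfl fun j _ ↦ Real.coe_toNNReal _ (hε j),
      Real.coe_toNNReal _ hπN, ← Finset.sum_div]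
    field_simp
  have hQ := isCompact_Qcube (d := d) (Real.pi * N)
  have hξ j : ∀ᵐ ξ ∂volume.restrict (Qcube d (Real.pi * N)), ‖ξ j‖₊ ≤ (Real.pi * N).toNNReal := by
    filter_upwards [ae_restrict_mem hQ.measurableSet] with ξ hξ
    exact NNReal.le_toNNReal_of_coe_le (hξ j)
  calc
    _ = eLpNorm (fun n ↦ f (lam n) - f (latticePt d N n)) 2 Measure.count :=
      (eLpNorm_two_count _).symm
    _ ≤ _ := hFT.eLpNorm_sub_le_of_isBessel hf hfm hQ.measure_ne_top hsupp
      (isBessel_expInner_latticePt hN) hξ fun n j ↦ NNReal.le_toNNReal_of_coe_le (hlam n j)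
    _ = _ := by
      have hE : 0 ≤ Real.exp (Real.pi * ∑ j, ε j) - 1 := by
        rw [← hab, sub_nonneg]
        exact Real.one_le_exp (NNReal.coe_nonneg _)
      rw [hab, ← two_pi_rpow_neg_mul_sqrt d hN.le, l2norm,
        ENNReal.ofReal_mul (by positivity), ENNReal.ofReal_mul hE,
        ENNReal.ofReal_mul (by positivity), ENNReal.ofReal_toReal hfm.2.ne]
      ring

/-- Let `N > 0`, `ε ∈ (0,1)` and `(λ_n)` with `|λ_n - n/N| ≤ ε/N`. Then every `f ∈ 𝒫_N`
(continuous representative, Fourier transform supported in `Q_{πN}(0)`) satisfies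
`(Σ_{n ∈ ℤ^d} |f(λ_n) - f(n/N)|²)^{1/2} ≤ ε π d e^{πd} N^{d/2} ‖f‖`. -/
theorem statement11 (d : ℕ) (hd : 0 < d) (N ε : ℝ) (hN : 0 < N) (hε : ε ∈ Set.Ioo (0 : ℝ) 1)
    (lam : (Fin d → ℤ) → EuclideanSpace ℝ (Fin d))
    (hlam : ∀ n, ‖lam n - latticePt d N n‖ ≤ ε / N)
    (f fhat : EuclideanSpace ℝ (Fin d) → ℂ)
    (hf : Continuous f) (hfm : MemLp f 2 volume) (hFT : IsL2Fourier d f fhat)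
    (hsupp : ∀ᵐ ξ ∂(volume : Measure (EuclideanSpace ℝ (Fin d))),
      ξ ∉ Qcube d (Real.pi * N) → fhat ξ = 0) :
    (∑' n : Fin d → ℤ, (‖f (lam n) - f (latticePt d N n)‖₊ : ℝ≥0∞) ^ 2) ^ ((1 : ℝ) / 2)
      ≤ ENNReal.ofReal
          (ε * Real.pi * d * Real.exp (Real.pi * d) * N ^ ((d : ℝ) / 2) * l2norm d f) := by
  refine (statement11_general d N hN (fun _ ↦ ε) lam
    (fun n j ↦ (PiLp.norm_apply_le (lam n - latticePt d N n) j).trans (hlam n))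
    f fhat hf hfm hFT hsupp).trans ?_
  gcongr
  · exact ENNReal.toReal_nonneg
  · exact exp_pi_mul_sum_sub_one_le d hε.1.le hε.2.le
end
end

section
/- There is a constant C = C(d) > 0 with the following property: for every u₀ ∈ L²(ℝ^d), every T > 0, N > 0, ε ∈ (0,1), and every family (λ_n)_{n∈ℤ^d} ⊂ ℝ^d satisfying |λ_n − n/N| ≤ ε/N for all n ∈ ℤ^d, the heat solution u with initial datum u₀ satisfies (Σ_{n∈ℤ^d} |u(T,λ_n) − u(T,n/N)|²)^{1/2} ≤ C ε N^{d/2} (1 + (TN²)^{-d/4 − 1/2} e^{-TN²}) ‖u₀‖. -/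
/-!
Write `G_t` for the heat kernel. The gradient of `G_t` costs a factor `t^{-1/2}` and a doubling of
the time, so `|G_T(λ - y) - G_T(p - y)| ≤ 2^{d/2} |λ - p| T^{-1/2} (G_{2T}(λ - y) + G_{2T}(p - y))`.
Schur's test then bounds the `ℓ²` norm of the differences `u(T, λ_n) - u(T, p_n)` by `‖u₀‖`, using
the row integrals `∫ G_{2T} = 1` and the column sums `∑_n G_{2T}(λ_n - y)`. When `2T ≥ N^{-2}`, each
term of a column sum is at most a constant times the average of `G_{4T}` over the ball of radius
`1/(2N)` about `p_n`; these balls are disjoint, so the column sum is `O(N^d)`. A smaller `2T` is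
first enlarged to `N^{-2}`, at the cost of a factor `(2TN²)^{-d/2}`. With `τ = TN²` the result is
the bound `O(ε N^{d/2} τ^{-1/2} max(1, τ^{-1})^{d/4})`, which is stronger than the one claimed: for
`τ ≤ 1` the last two factors are `τ^{-d/4-1/2} ≤ e · τ^{-d/4-1/2} e^{-τ}`, and for `τ ≥ 1` they are
at most `1`.
-/

open MeasureTheory Filter Topology Metric ENNReal NNReal

noncomputable section

section SchurTest

variable {X ι : Type*} [MeasurableSpace X] {μ : Measure X}

lemma sq_lintegral_mul_le {k f : X → ℝ≥0∞} (hk : AEMeasurable k μ) (hf : AEMeasurable f μ) :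
    (∫⁻ x, k x * f x ∂μ) ^ 2 ≤ (∫⁻ x, k x ∂μ) * ∫⁻ x, k x * f x ^ 2 ∂μ := by
  have rpow_half_sq (a : ℝ≥0∞) : (a ^ (1 / 2 : ℝ)) ^ 2 = a := by
    rw [← ENNReal.rpow_natCast, ← ENNReal.rpow_mul]; norm_num
  have sq_rpow_half (a : ℝ≥0∞) : (a ^ 2) ^ (1 / 2 : ℝ) = a := by
    rw [← ENNReal.rpow_natCast, ← ENNReal.rpow_mul]; norm_num
  have split (x : X) : k x * f x = k x ^ (1 / 2 : ℝ) * (k x * f x ^ 2) ^ (1 / 2 : ℝ) := by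
    rw [← ENNReal.mul_rpow_of_nonneg _ _ (by norm_num), ← mul_assoc, ← sq, ← mul_pow, sq_rpow_half]
  simp_rw [split]
  calc _ ≤ ((∫⁻ x, k x ∂μ) ^ (1 / 2 : ℝ) * (∫⁻ x, k x * f x ^ 2 ∂μ) ^ (1 / 2 : ℝ)) ^ 2 := by
        gcongr
        exact ENNReal.lintegral_mul_norm_pow_le hk (hk.mul (hf.pow_const 2)) (by norm_num)
          (by norm_num) (by norm_num)
    _ = _ := by rw [mul_pow, rpow_half_sq, rpow_half_sq]

lemma tsum_sq_lintegral_mul_le {k : ι → X → ℝ≥0∞} {f : X → ℝ≥0∞}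
    (hk : ∀ i, AEMeasurable (k i) μ) (hf : AEMeasurable f μ) {A B : ℝ≥0∞}
    (hA : ∀ i, ∫⁻ x, k i x ∂μ ≤ A) (hB : ∀ x, ∑' i, k i x ≤ B) :
    ∑' i, (∫⁻ x, k i x * f x ∂μ) ^ 2 ≤ A * B * ∫⁻ x, f x ^ 2 ∂μ := by
  refine ENNReal.summable.tsum_le_of_sum_le fun s => ?_
  calc ∑ i ∈ s, (∫⁻ x, k i x * f x ∂μ) ^ 2
      ≤ ∑ i ∈ s, A * ∫⁻ x, k i x * f x ^ 2 ∂μ := by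
        gcongr with i
        exact (sq_lintegral_mul_le (hk i) hf).trans (by gcongr; exact hA i)
    _ = A * ∫⁻ x, (∑ i ∈ s, k i x) * f x ^ 2 ∂μ := by
        simp_rw [← Finset.mul_sum, Finset.sum_mul]
        rw [lintegral_finsetSum' (f := fun i x => k i x * f x ^ 2) s
          fun i _ => (hk i).mul (hf.pow_const 2)]
    _ ≤ A * ∫⁻ x, B * f x ^ 2 ∂μ := by
        gcongr with x
        exact (ENNReal.sum_le_tsum s).trans (hB x)
    _ = A * B * ∫⁻ x, f x ^ 2 ∂μ := by rw [lintegral_const_mul'' _ (hf.pow_const 2), mul_assoc]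

lemma tsum_mul_measure_le_lintegral {s : ι → Set X} (hs : ∀ i, MeasurableSet (s i))
    (hdisj : Pairwise (Function.onFun Disjoint s)) {c : ι → ℝ≥0∞} {f : X → ℝ≥0∞}
    (hcf : ∀ i, ∀ x ∈ s i, c i ≤ f x) :
    ∑' i, c i * μ (s i) ≤ ∫⁻ x, f x ∂μ := by
  refine ENNReal.summable.tsum_le_of_sum_le fun t => ?_
  calc ∑ i ∈ t, c i * μ (s i)
      ≤ ∑ i ∈ t, ∫⁻ x in s i, f x ∂μ := by
        gcongr with i
        rw [← setLIntegral_const]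
        exact setLIntegral_mono' (hs i) (hcf i)
    _ = ∫⁻ x in ⋃ i ∈ t, s i, f x ∂μ :=
        (lintegral_biUnion_finset (hdisj.set_pairwise _) (fun i _ => hs i) f).symm
    _ ≤ ∫⁻ x, f x ∂μ := setLIntegral_le_lintegral _ _

lemma lintegral_enorm_sq_eq_eLpNorm_sq {E : Type*} [NormedAddCommGroup E] (f : X → E) :
    ∫⁻ x, ‖f x‖ₑ ^ 2 ∂μ = eLpNorm f 2 μ ^ 2 := by
  simpa using (eLpNorm_nnreal_pow_eq_lintegral (f := f) (μ := μ) (p := 2) two_ne_zero).symm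

end SchurTest

lemma norm_deriv_exp_neg_sq_le (x : ℝ) :
    ‖deriv (fun x : ℝ => Real.exp (-x ^ 2)) x‖ ≤ 2 * Real.exp (-x ^ 2 / 2) := by
  have hderiv : deriv (fun x : ℝ => Real.exp (-x ^ 2)) x = Real.exp (-x ^ 2) * -(2 * x) := by
    simp
  have habs : |x| * Real.exp (-(x ^ 2 / 2)) ≤ 1 := by
    rw [Real.exp_neg, ← div_eq_mul_inv, div_le_one (Real.exp_pos _)]
    nlinarith [Real.add_one_le_exp (x ^ 2 / 2), sq_nonneg (|x| - 1), sq_abs x]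
  have hsplit : Real.exp (-x ^ 2) = Real.exp (-x ^ 2 / 2) * Real.exp (-(x ^ 2 / 2)) := by
    rw [← Real.exp_add]; ring_nf
  calc ‖deriv (fun x : ℝ => Real.exp (-x ^ 2)) x‖
      = 2 * Real.exp (-x ^ 2 / 2) * (|x| * Real.exp (-(x ^ 2 / 2))) := by
        rw [hderiv, norm_mul, norm_neg, norm_mul, Real.norm_eq_abs x, Real.norm_two,
          Real.norm_of_nonneg (Real.exp_pos _).le, hsplit]
        ring
    _ ≤ 2 * Real.exp (-x ^ 2 / 2) * 1 := by gcongr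
    _ = 2 * Real.exp (-x ^ 2 / 2) := mul_one _

lemma abs_exp_neg_sq_sub_le {r s : ℝ} (hr : 0 ≤ r) (hs : 0 ≤ s) :
    |Real.exp (-r ^ 2) - Real.exp (-s ^ 2)| ≤
      2 * |r - s| * (Real.exp (-r ^ 2 / 2) + Real.exp (-s ^ 2 / 2)) := by
  have hbound : ∀ x ∈ Set.uIcc s r, ‖deriv (fun x : ℝ => Real.exp (-x ^ 2)) x‖ ≤
      2 * (Real.exp (-r ^ 2 / 2) + Real.exp (-s ^ 2 / 2)) := by
    intro x hx
    refine (norm_deriv_exp_neg_sq_le x).trans ?_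
    gcongr
    rcases Set.mem_uIcc.1 hx with ⟨hsx, -⟩ | ⟨hrx, -⟩
    · exact le_add_of_nonneg_of_le (Real.exp_pos _).le (by gcongr)
    · exact le_add_of_le_of_nonneg (by gcongr) (Real.exp_pos _).le
  have := Convex.norm_image_sub_le_of_norm_deriv_le (fun x _ => by fun_prop) hbound
    (convex_uIcc s r) Set.left_mem_uIcc Set.right_mem_uIcc
  rw [Real.norm_eq_abs, Real.norm_eq_abs] at this
  linarith

section HeatKernel

open Module

variable {V : Type*} [NormedAddCommGroup V] [InnerProductSpace ℝ V]

/-- The Gauss–Weierstrass kernel `(4πt)^{-d/2} e^{-|x|²/(4t)}` of a `d`-dimensional Euclidean space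
at time `t`. -/
def heatKernel (t : ℝ) (x : V) : ℝ :=
  (4 * Real.pi * t) ^ (-(finrank ℝ V : ℝ) / 2) * Real.exp (-‖x‖ ^ 2 / (4 * t))

lemma heatKernel_nonneg {t : ℝ} (ht : 0 ≤ t) (x : V) : 0 ≤ heatKernel t x := by
  unfold heatKernel; positivity

lemma heatKernel_sub_comm (t : ℝ) (x y : V) : heatKernel t (x - y) = heatKernel t (y - x) := by
  rw [heatKernel, heatKernel, norm_sub_rev]

lemma heatKernel_le {t : ℝ} (ht : 0 ≤ t) (x : V) :
    heatKernel t x ≤ (4 * Real.pi * t) ^ (-(finrank ℝ V : ℝ) / 2) :=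
  mul_le_of_le_one_right (by positivity)
    (Real.exp_le_one_iff.2 (div_nonpos_of_nonpos_of_nonneg (by simp) (by positivity)))

@[fun_prop]
lemma continuous_heatKernel (t : ℝ) : Continuous (heatKernel t : V → ℝ) := by
  unfold heatKernel; fun_prop

variable (V) in
lemma heatKernel_normalization_eq {t s : ℝ} (ht : 0 < t) (hs : 0 < s) :
    (4 * Real.pi * t) ^ (-(finrank ℝ V : ℝ) / 2) =
      (s / t) ^ ((finrank ℝ V : ℝ) / 2) * (4 * Real.pi * s) ^ (-(finrank ℝ V : ℝ) / 2) := by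
  have hratio : s / t = (4 * Real.pi * s) / (4 * Real.pi * t) := by field_simp
  rw [hratio, neg_div, Real.div_rpow (by positivity) (by positivity),
    Real.rpow_neg (by positivity), Real.rpow_neg (by positivity)]
  field_simp

lemma heatKernel_le_of_le {t s : ℝ} (ht : 0 < t) (hts : t ≤ s) (x : V) :
    heatKernel t x ≤ (s / t) ^ ((finrank ℝ V : ℝ) / 2) * heatKernel s x := by
  have hs : 0 < s := ht.trans_le hts
  rw [heatKernel, heatKernel, heatKernel_normalization_eq V ht hs, mul_assoc]
  gcongr _ * (_ * Real.exp ?_)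
  rw [neg_div, neg_div, neg_le_neg_iff]
  gcongr

lemma heatKernel_le_heatKernel_two_mul {t ρ : ℝ} (ht : 0 < t) {x y : V}
    (hxy : ‖x - y‖ ≤ ρ * √t) :
    heatKernel t x ≤
      2 ^ ((finrank ℝ V : ℝ) / 2) * Real.exp (ρ ^ 2 / 4) * heatKernel (2 * t) y := by
  have hy : ‖y‖ ^ 2 ≤ 2 * (‖x‖ ^ 2 + ρ ^ 2 * t) :=
    calc ‖y‖ ^ 2 ≤ (‖x‖ + ρ * √t) ^ 2 := by
          gcongr
          linarith [norm_le_norm_add_norm_sub x y]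
      _ ≤ 2 * (‖x‖ ^ 2 + (ρ * √t) ^ 2) := add_sq_le
      _ = 2 * (‖x‖ ^ 2 + ρ ^ 2 * t) := by rw [mul_pow, Real.sq_sqrt ht.le]
  have hexp : -‖x‖ ^ 2 / (4 * t) ≤ ρ ^ 2 / 4 + -‖y‖ ^ 2 / (4 * (2 * t)) := by
    field_simp
    linarith
  calc heatKernel t x
      ≤ (4 * Real.pi * t) ^ (-(finrank ℝ V : ℝ) / 2) *
          (Real.exp (ρ ^ 2 / 4) * Real.exp (-‖y‖ ^ 2 / (4 * (2 * t)))) := by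
        rw [heatKernel, ← Real.exp_add]
        gcongr
    _ = _ := by
        rw [heatKernel, heatKernel_normalization_eq V ht (by positivity : 0 < 2 * t),
          mul_div_cancel_right₀ _ ht.ne']
        ring

lemma abs_heatKernel_sub_le {t : ℝ} (ht : 0 < t) (x y : V) :
    |heatKernel t x - heatKernel t y| ≤ 2 ^ ((finrank ℝ V : ℝ) / 2) * (‖x - y‖ / √t) *
      (heatKernel (2 * t) x + heatKernel (2 * t) y) := by
  have hsq (z : V) : -(‖z‖ / (2 * √t)) ^ 2 = -‖z‖ ^ 2 / (4 * t) := by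
    rw [div_pow, mul_pow, Real.sq_sqrt ht.le]; ring
  have hhalf (z : V) : -‖z‖ ^ 2 / (4 * t) / 2 = -‖z‖ ^ 2 / (4 * (2 * t)) := by
    field_simp
  have hdist : 2 * |‖x‖ / (2 * √t) - ‖y‖ / (2 * √t)| ≤ ‖x - y‖ / √t :=
    calc 2 * |‖x‖ / (2 * √t) - ‖y‖ / (2 * √t)| = |‖x‖ - ‖y‖| / √t := by
          rw [← _root_.sub_div, abs_div, abs_of_pos (by positivity : 0 < 2 * √t)]
          field_simp
      _ ≤ ‖x - y‖ / √t := by gcongr; exact abs_norm_sub_norm_le x y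
  have hexp : |Real.exp (-‖x‖ ^ 2 / (4 * t)) - Real.exp (-‖y‖ ^ 2 / (4 * t))| ≤ ‖x - y‖ / √t *
      (Real.exp (-‖x‖ ^ 2 / (4 * (2 * t))) + Real.exp (-‖y‖ ^ 2 / (4 * (2 * t)))) := by
    have := abs_exp_neg_sq_sub_le (r := ‖x‖ / (2 * √t)) (s := ‖y‖ / (2 * √t))
      (by positivity) (by positivity)
    rw [hsq, hsq, hhalf, hhalf] at this
    exact this.trans (by gcongr)
  have hpos : 0 ≤ (4 * Real.pi * t) ^ (-(finrank ℝ V : ℝ) / 2) := by positivity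
  have := mul_le_mul_of_nonneg_left hexp hpos
  rw [heatKernel, heatKernel, ← mul_sub, abs_mul, abs_of_nonneg hpos]
  refine this.trans_eq ?_
  rw [heatKernel, heatKernel, heatKernel_normalization_eq V ht (by positivity : 0 < 2 * t),
    mul_div_cancel_right₀ _ ht.ne']
  ring

variable [FiniteDimensional ℝ V] [MeasurableSpace V] [BorelSpace V]

lemma integral_heatKernel {t : ℝ} (ht : 0 < t) : ∫ x : V, heatKernel t x = 1 := by
  have hexp (x : V) : -‖x‖ ^ 2 / (4 * t) = -(1 / (4 * t)) * ‖x‖ ^ 2 := by ring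
  simp_rw [heatKernel, hexp]
  rw [integral_const_mul, GaussianFourier.integral_rexp_neg_mul_sq_norm (by positivity),
    div_div_eq_mul_div, div_one, mul_comm Real.pi, mul_right_comm, neg_div,
    ← Real.rpow_add (by positivity), neg_add_cancel, Real.rpow_zero]

lemma integrable_heatKernel {t : ℝ} (ht : 0 < t) : Integrable (heatKernel t : V → ℝ) :=
  .of_integral_ne_zero (by rw [integral_heatKernel ht]; exact one_ne_zero)

lemma lintegral_heatKernel_sub {t : ℝ} (ht : 0 < t) (x : V) :
    ∫⁻ y, ENNReal.ofReal (heatKernel t (x - y)) = 1 := by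
  rw [lintegral_sub_left_eq_self (fun y => ENNReal.ofReal (heatKernel t y)) x,
    ← ofReal_integral_eq_lintegral_ofReal (integrable_heatKernel ht)
      (.of_forall (heatKernel_nonneg ht.le)), integral_heatKernel ht, ENNReal.ofReal_one]

lemma memLp_two_heatKernel_sub {t : ℝ} (ht : 0 < t) (x : V) :
    MemLp (fun y => heatKernel t (x - y)) 2 := by
  have hcont : Continuous fun y => heatKernel t (x - y) := by fun_prop
  rw [memLp_two_iff_integrable_sq hcont.aestronglyMeasurable]
  simp_rw [sq]
  refine ((integrable_heatKernel ht).comp_sub_left x).bdd_mul hcont.aestronglyMeasurable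
    (c := (4 * Real.pi * t) ^ (-(finrank ℝ V : ℝ) / 2)) (.of_forall fun y => ?_)
  rw [Real.norm_of_nonneg (heatKernel_nonneg ht.le _)]
  exact heatKernel_le ht.le _

/-- The constant in the bound for sums of heat kernels over a `δ`-separated set perturbed by at
most `Rδ`. -/
def heatKernelSumConst (V : Type*) [NormedAddCommGroup V] [InnerProductSpace ℝ V]
    [MeasurableSpace V] [BorelSpace V] [FiniteDimensional ℝ V] (R : ℝ) : ℝ :=
  2 ^ ((finrank ℝ V : ℝ) / 2) * Real.exp ((R + 1 / 2) ^ 2 / 4) / volume.real (ball (0 : V) (1 / 2))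

lemma heatKernelSumConst_pos (R : ℝ) : 0 < heatKernelSumConst V R :=
  div_pos (by positivity) (ENNReal.toReal_pos (measure_ball_pos _ _ (by norm_num)).ne'
    measure_ball_lt_top.ne)

lemma tsum_heatKernel_sub_le_of_sq_le {ι : Type*} {t δ R : ℝ} (hδ : 0 < δ) (hδt : δ ^ 2 ≤ t)
    {p q : ι → V} (hp : Pairwise fun i j => δ ≤ dist (p i) (p j))
    (hq : ∀ i, ‖q i - p i‖ ≤ R * δ) (z : V) :
    ∑' i, ENNReal.ofReal (heatKernel t (q i - z)) ≤
      ENNReal.ofReal (heatKernelSumConst V R / δ ^ finrank ℝ V) := by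
  have ht : 0 < t := (by positivity : 0 < δ ^ 2).trans_le hδt
  set K : ℝ := 2 ^ ((finrank ℝ V : ℝ) / 2) * Real.exp ((R + 1 / 2) ^ 2 / 4) with hK
  set v : ℝ := volume.real (ball (0 : V) (1 / 2))
  have hv : 0 < v := ENNReal.toReal_pos (measure_ball_pos _ _ (by norm_num)).ne'
    measure_ball_lt_top.ne
  have hdisj : Pairwise (Function.onFun Disjoint fun i => ball (p i) (δ * (1 / 2))) :=
    fun i j hij => ball_disjoint_ball (by linarith [hp hij])
  have hvol (i : ι) :
      volume (ball (p i) (δ * (1 / 2))) = ENNReal.ofReal (δ ^ finrank ℝ V * v) := by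
    rw [Measure.addHaar_ball_mul_of_pos _ _ hδ, ENNReal.ofReal_mul (by positivity),
      ofReal_measureReal measure_ball_lt_top.ne]
  have hball : ∀ i, ∀ w ∈ ball (p i) (δ * (1 / 2)), ENNReal.ofReal (heatKernel t (q i - z)) ≤
      ENNReal.ofReal K * ENNReal.ofReal (heatKernel (2 * t) (z - w)) := by
    intro i w hw
    have hR : 0 ≤ R := nonneg_of_mul_nonneg_left ((norm_nonneg _).trans (hq i)) hδ
    have hdist : ‖(q i - z) - (w - z)‖ ≤ (R + 1 / 2) * √t :=
      calc ‖(q i - z) - (w - z)‖ = ‖q i - w‖ := by rw [sub_sub_sub_cancel_right]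
        _ ≤ ‖q i - p i‖ + ‖p i - w‖ := norm_sub_le_norm_sub_add_norm_sub _ _ _
        _ ≤ R * δ + δ * (1 / 2) := add_le_add (hq i) (mem_ball_iff_norm'.1 hw).le
        _ = (R + 1 / 2) * δ := by ring
        _ ≤ (R + 1 / 2) * √t := by gcongr; exact Real.le_sqrt_of_sq_le hδt
    rw [← ENNReal.ofReal_mul (by positivity), heatKernel_sub_comm _ z w]
    exact ENNReal.ofReal_le_ofReal (heatKernel_le_heatKernel_two_mul ht hdist)
  have hsum := tsum_mul_measure_le_lintegral (μ := volume) (fun _ => measurableSet_ball) hdisj hball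
  simp_rw [hvol] at hsum
  rw [ENNReal.tsum_mul_right, lintegral_const_mul' _ _ ENNReal.ofReal_ne_top,
    lintegral_heatKernel_sub (by positivity), mul_one] at hsum
  have hvolpos : 0 < δ ^ finrank ℝ V * v := by positivity
  rw [heatKernelSumConst, ← hK, div_div, mul_comm v, ENNReal.ofReal_div_of_pos hvolpos]
  exact (ENNReal.le_div_iff_mul_le (.inl (ENNReal.ofReal_pos.2 hvolpos).ne')
    (.inl ENNReal.ofReal_ne_top)).2 hsum

lemma tsum_heatKernel_sub_le {ι : Type*} {t δ R : ℝ} (ht : 0 < t) (hδ : 0 < δ)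
    {p q : ι → V} (hp : Pairwise fun i j => δ ≤ dist (p i) (p j))
    (hq : ∀ i, ‖q i - p i‖ ≤ R * δ) (z : V) :
    ∑' i, ENNReal.ofReal (heatKernel t (q i - z)) ≤
      ENNReal.ofReal (max 1 (δ ^ 2 / t) ^ ((finrank ℝ V : ℝ) / 2) *
        (heatKernelSumConst V R / δ ^ finrank ℝ V)) := by
  set s : ℝ := max t (δ ^ 2)
  have hs : s / t = max 1 (δ ^ 2 / t) := by
    rw [← max_div_div_right ht.le, div_self ht.ne']
  rw [← hs, ENNReal.ofReal_mul (by positivity)]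
  calc ∑' i, ENNReal.ofReal (heatKernel t (q i - z))
      ≤ ∑' i, ENNReal.ofReal ((s / t) ^ ((finrank ℝ V : ℝ) / 2)) *
          ENNReal.ofReal (heatKernel s (q i - z)) := by
        refine ENNReal.tsum_le_tsum fun i => ?_
        rw [← ENNReal.ofReal_mul (by positivity)]
        exact ENNReal.ofReal_le_ofReal (heatKernel_le_of_le ht (le_max_left _ _) _)
    _ ≤ _ := by
        rw [ENNReal.tsum_mul_left]
        gcongr
        exact tsum_heatKernel_sub_le_of_sq_le hδ (le_max_right _ _) hp hq z

lemma tsum_heatKernel_sub_add_le {ι : Type*} {t δ R : ℝ} (ht : 0 < t) (hδ : 0 < δ)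
    {p q : ι → V} (hp : Pairwise fun i j => δ ≤ dist (p i) (p j))
    (hq : ∀ i, ‖q i - p i‖ ≤ R * δ) (z : V) :
    ∑' i, (ENNReal.ofReal (heatKernel t (q i - z)) + ENNReal.ofReal (heatKernel t (p i - z))) ≤
      2 * ENNReal.ofReal (max 1 (δ ^ 2 / t) ^ ((finrank ℝ V : ℝ) / 2) *
        (heatKernelSumConst V R / δ ^ finrank ℝ V)) := by
  have hpp (i : ι) : ‖p i - p i‖ ≤ R * δ := by
    rw [sub_self, norm_zero]
    exact (norm_nonneg _).trans (hq i)
  rw [ENNReal.tsum_add, two_mul]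
  exact add_le_add (tsum_heatKernel_sub_le ht hδ hp hq z) (tsum_heatKernel_sub_le ht hδ hp hpp z)

variable {E : Type*} [NormedAddCommGroup E] [NormedSpace ℝ E]

/-- The heat evolution `e^{tΔ} u₀ = G_t * u₀` of a vector-valued datum, as an explicit convolution
with the heat kernel. -/
def heatFlow (t : ℝ) (u₀ : V → E) (x : V) : E :=
  ∫ y, heatKernel t (x - y) • u₀ y

lemma heatSol_eq_heatFlow (d : ℕ) (u₀ : EuclideanSpace ℝ (Fin d) → ℝ) (t : ℝ) :
    heatSol d u₀ t = heatFlow t u₀ := by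
  ext x
  simp only [heatSol, heatFlow, heatKernel, finrank_euclideanSpace_fin, smul_eq_mul, mul_assoc,
    integral_const_mul]

lemma enorm_heatFlow_sub_le {t : ℝ} (ht : 0 < t) {u₀ : V → E} (hu : MemLp u₀ 2) (x y : V) :
    ‖heatFlow t u₀ x - heatFlow t u₀ y‖ₑ ≤
      ENNReal.ofReal (2 ^ ((finrank ℝ V : ℝ) / 2) * (‖x - y‖ / √t)) *
        ∫⁻ z, (ENNReal.ofReal (heatKernel (2 * t) (x - z)) +
          ENNReal.ofReal (heatKernel (2 * t) (y - z))) * ‖u₀ z‖ₑ := by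
  have hint (w : V) : Integrable fun z => heatKernel t (w - z) • u₀ z :=
    memLp_one_iff_integrable.1 (hu.smul (memLp_two_heatKernel_sub ht w))
  have hnonneg (w : V) : 0 ≤ heatKernel (2 * t) w := heatKernel_nonneg (by positivity) w
  rw [heatFlow, heatFlow, ← integral_sub (hint x) (hint y),
    ← lintegral_const_mul' _ _ ENNReal.ofReal_ne_top]
  refine (enorm_integral_le_lintegral_enorm _).trans (lintegral_mono fun z => ?_)
  rw [← sub_smul, enorm_smul, ← mul_assoc, ← ENNReal.ofReal_add (hnonneg _) (hnonneg _),
    ← ENNReal.ofReal_mul (by positivity), Real.enorm_eq_ofReal_abs]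
  gcongr
  simpa only [sub_sub_sub_cancel_right] using abs_heatKernel_sub_le ht (x - z) (y - z)

lemma tsum_enorm_heatFlow_sub_sq_le {ι : Type*} {t δ ε R : ℝ} (ht : 0 < t) (hδ : 0 < δ)
    (hε : ε ∈ Set.Icc 0 R) {u₀ : V → E} (hu : MemLp u₀ 2) {p q : ι → V}
    (hp : Pairwise fun i j => δ ≤ dist (p i) (p j)) (hq : ∀ i, ‖q i - p i‖ ≤ ε * δ) :
    ∑' i, ‖heatFlow t u₀ (q i) - heatFlow t u₀ (p i)‖ₑ ^ 2 ≤
      ENNReal.ofReal (2 ^ ((finrank ℝ V : ℝ) / 2) * (ε * δ / √t)) ^ 2 *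
        (ENNReal.ofReal (4 * (max 1 (δ ^ 2 / t) ^ ((finrank ℝ V : ℝ) / 2) *
          (heatKernelSumConst V R / δ ^ finrank ℝ V))) * eLpNorm u₀ 2 ^ 2) := by
  have ht2 : 0 < 2 * t := by positivity
  set S : ℝ := max 1 (δ ^ 2 / t) ^ ((finrank ℝ V : ℝ) / 2) *
    (heatKernelSumConst V R / δ ^ finrank ℝ V) with hS
  set g : V → V → ℝ≥0∞ := fun x z => ENNReal.ofReal (heatKernel (2 * t) (x - z))
  have hmeas (x : V) : Measurable (g x) := by fun_prop
  have hrow (x y : V) : ∫⁻ z, g x z + g y z ≤ 2 := by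
    rw [lintegral_add_left (hmeas x), lintegral_heatKernel_sub ht2, lintegral_heatKernel_sub ht2,
      one_add_one_eq_two]
  have hcol (z : V) : ∑' i, (g (q i) z + g (p i) z) ≤ 2 * ENNReal.ofReal S := by
    have hqR (i : ι) : ‖q i - p i‖ ≤ R * δ := (hq i).trans (by gcongr; exact hε.2)
    refine (tsum_heatKernel_sub_add_le ht2 hδ hp hqR z).trans ?_
    have hconst := (heatKernelSumConst_pos (V := V) R).le
    rw [hS]
    gcongr
    linarith
  calc _ ≤ ∑' i, (ENNReal.ofReal (2 ^ ((finrank ℝ V : ℝ) / 2) * (ε * δ / √t)) *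
        ∫⁻ z, (g (q i) z + g (p i) z) * ‖u₀ z‖ₑ) ^ 2 := by
        gcongr with i
        refine (enorm_heatFlow_sub_le ht hu (q i) (p i)).trans ?_
        gcongr
        exact hq i
    _ ≤ _ := by
        simp_rw [mul_pow]
        rw [ENNReal.tsum_mul_left]
        gcongr
        refine (tsum_sq_lintegral_mul_le (fun i => ((hmeas _).add (hmeas _)).aemeasurable)
          hu.1.enorm (fun i => hrow (q i) (p i)) hcol).trans_eq ?_
        rw [lintegral_enorm_sq_eq_eLpNorm_sq, ENNReal.ofReal_mul (p := 4) zero_le_four,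
          ENNReal.ofReal_ofNat, ← mul_assoc 2]
        norm_num

/-- The constant `C(d, R)` in the sampling estimate for `e^{tΔ} u₀`. -/
def heatSamplingConst (V : Type*) [NormedAddCommGroup V] [InnerProductSpace ℝ V]
    [MeasurableSpace V] [BorelSpace V] [FiniteDimensional ℝ V] (R : ℝ) : ℝ :=
  2 ^ ((finrank ℝ V : ℝ) / 2) * (2 * √(heatKernelSumConst V R))

lemma heatSamplingConst_pos (R : ℝ) : 0 < heatSamplingConst V R :=
  mul_pos (by positivity) (mul_pos two_pos (Real.sqrt_pos.2 (heatKernelSumConst_pos R)))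

lemma sqrt_tsum_enorm_heatFlow_sub_sq_le {ι : Type*} {T N ε R : ℝ} (hT : 0 < T) (hN : 0 < N)
    (hε : ε ∈ Set.Icc 0 R) {u₀ : V → E} (hu : MemLp u₀ 2) {p q : ι → V}
    (hp : Pairwise fun i j => 1 / N ≤ dist (p i) (p j)) (hq : ∀ i, ‖q i - p i‖ ≤ ε / N) :
    (∑' i, ‖heatFlow T u₀ (q i) - heatFlow T u₀ (p i)‖ₑ ^ 2) ^ ((1 : ℝ) / 2) ≤
      ENNReal.ofReal (heatSamplingConst V R * ε * N ^ ((finrank ℝ V : ℝ) / 2) *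
        ((T * N ^ 2) ^ (-1 / 2 : ℝ) * max 1 (T * N ^ 2)⁻¹ ^ ((finrank ℝ V : ℝ) / 4))) *
          eLpNorm u₀ 2 := by
  have hD := heatKernelSumConst_pos (V := V) R
  set d : ℝ := ((finrank ℝ V : ℕ) : ℝ) with hd
  set τ := T * N ^ 2 with hτ
  set M : ℝ := 2 * √(heatKernelSumConst V R) * max 1 τ⁻¹ ^ (d / 4) * N ^ (d / 2) with hM
  have hratio : (1 / N) ^ 2 / T = τ⁻¹ := by rw [hτ]; field_simp
  have hτrpow : ε * (1 / N) / √T = ε * τ ^ (-1 / 2 : ℝ) := by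
    rw [neg_div, Real.rpow_neg (by positivity), ← Real.sqrt_eq_rpow, Real.sqrt_mul hT.le,
      Real.sqrt_sq hN.le]
    field_simp
  have hsq : 4 * (max 1 τ⁻¹ ^ (d / 2) * (heatKernelSumConst V R / (1 / N) ^ finrank ℝ V)) =
      M ^ 2 := by
    rw [hM, mul_pow, mul_pow, mul_pow, Real.sq_sqrt hD.le, ← Real.rpow_mul_natCast (by positivity),
      ← Real.rpow_mul_natCast hN.le, ← Real.rpow_natCast (1 / N), ← hd, one_div N,
      Real.inv_rpow hN.le, div_inv_eq_mul]
    ring_nf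
  have h := tsum_enorm_heatFlow_sub_sq_le hT (one_div_pos.2 hN) hε hu hp
    (fun i => (hq i).trans_eq (by ring))
  rw [hratio, hτrpow, hsq, ENNReal.ofReal_pow (by positivity), ← mul_pow, ← mul_pow] at h
  calc _ ≤ ((ENNReal.ofReal (2 ^ (d / 2) * (ε * τ ^ (-1 / 2 : ℝ))) *
        (ENNReal.ofReal M * eLpNorm u₀ 2)) ^ 2) ^ ((1 : ℝ) / 2) := by gcongr
    _ = _ := by
        rw [← ENNReal.rpow_natCast, ← ENNReal.rpow_mul, Nat.cast_ofNat,
          mul_one_div_cancel two_ne_zero, ENNReal.rpow_one, ← mul_assoc,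
          ← ENNReal.ofReal_mul' (by positivity), hM, heatSamplingConst, ← hd]
        ring_nf

lemma rpow_neg_half_mul_max_one_inv_rpow_le {τ : ℝ} (hτ : 0 < τ) (a : ℝ) :
    τ ^ (-1 / 2 : ℝ) * max 1 τ⁻¹ ^ a ≤
      Real.exp 1 * (1 + τ ^ (-a - 1 / 2) * Real.exp (-τ)) := by
  have hpow : 0 < τ ^ (-a - 1 / 2) := by positivity
  rcases le_total τ 1 with hτ1 | hτ1
  · have hexp : 1 ≤ Real.exp 1 * Real.exp (-τ) := by
      rw [← Real.exp_add]; exact Real.one_le_exp (by linarith)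
    calc τ ^ (-1 / 2 : ℝ) * max 1 τ⁻¹ ^ a = τ ^ (-a - 1 / 2) := by
          rw [max_eq_right (one_le_inv₀ hτ |>.2 hτ1), Real.inv_rpow hτ.le, ← Real.rpow_neg hτ.le,
            ← Real.rpow_add hτ]
          ring_nf
      _ ≤ τ ^ (-a - 1 / 2) * (Real.exp 1 * Real.exp (-τ)) := le_mul_of_one_le_right hpow.le hexp
      _ ≤ _ := by linarith [Real.exp_pos 1]
  · calc τ ^ (-1 / 2 : ℝ) * max 1 τ⁻¹ ^ a = τ ^ (-1 / 2 : ℝ) := by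
          rw [max_eq_left (inv_le_one_of_one_le₀ hτ1), Real.one_rpow, mul_one]
      _ ≤ 1 := Real.rpow_le_one_of_one_le_of_nonpos hτ1 (by norm_num)
      _ ≤ Real.exp 1 * (1 + τ ^ (-a - 1 / 2) * Real.exp (-τ)) :=
          one_le_mul_of_one_le_of_one_le (Real.one_le_exp zero_le_one)
            (le_add_of_nonneg_right (by positivity))

end HeatKernel

lemma one_div_le_dist_latticePt {d : ℕ} {N : ℝ} (hN : 0 < N) :
    Pairwise fun m n : Fin d → ℤ => 1 / N ≤ dist (latticePt d N m) (latticePt d N n) := by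
  intro m n hmn
  obtain ⟨j, hj⟩ := Function.ne_iff.1 hmn
  have hint : (1 : ℝ) ≤ |(m j : ℝ) - n j| := by
    exact_mod_cast Int.one_le_abs (sub_ne_zero.2 hj)
  calc 1 / N ≤ |(m j : ℝ) - n j| / N := by gcongr
    _ = ‖(latticePt d N m - latticePt d N n) j‖ := by
        simp only [latticePt, PiLp.sub_apply, ← _root_.sub_div, norm_div, Real.norm_eq_abs,
          abs_of_pos hN]
    _ ≤ dist (latticePt d N m) (latticePt d N n) := by
        rw [dist_eq_norm]; exact PiLp.norm_apply_le _ j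

theorem statement12_general {V : Type*} [NormedAddCommGroup V] [InnerProductSpace ℝ V]
    [FiniteDimensional ℝ V] [MeasurableSpace V] [BorelSpace V] (R : ℝ) :
    ∃ C : ℝ, 0 < C ∧
      ∀ {E : Type*} [NormedAddCommGroup E] [NormedSpace ℝ E] [CompleteSpace E] {ι : Type*}
        (u₀ : V → E), MemLp u₀ 2 →
      ∀ T N ε : ℝ, 0 < T → 0 < N → ε ∈ Set.Icc 0 R →
      ∀ p q : ι → V, (Pairwise fun i j => 1 / N ≤ dist (p i) (p j)) →
        (∀ i, ‖q i - p i‖ ≤ ε / N) →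
        (∑' i, ‖heatFlow T u₀ (q i) - heatFlow T u₀ (p i)‖ₑ ^ 2) ^ ((1 : ℝ) / 2) ≤
          ENNReal.ofReal (C * ε * N ^ ((Module.finrank ℝ V : ℝ) / 2) *
            (1 + (T * N ^ 2) ^ (-(Module.finrank ℝ V : ℝ) / 4 - 1 / 2) *
              Real.exp (-(T * N ^ 2)))) * eLpNorm u₀ 2 := by
  have hC := heatSamplingConst_pos (V := V) R
  refine ⟨heatSamplingConst V R * Real.exp 1, by positivity, ?_⟩
  intro E _ _ _ ι u₀ hu T N ε hT hN hε p q hp hq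
  refine (sqrt_tsum_enorm_heatFlow_sub_sq_le hT hN hε hu hp hq).trans ?_
  have hε0 : 0 ≤ ε := hε.1
  have hτ := rpow_neg_half_mul_max_one_inv_rpow_le (τ := T * N ^ 2) (by positivity)
    ((Module.finrank ℝ V : ℝ) / 4)
  gcongr ENNReal.ofReal ?_ * _
  calc _ ≤ heatSamplingConst V R * ε * N ^ ((Module.finrank ℝ V : ℝ) / 2) * _ :=
        mul_le_mul_of_nonneg_left hτ (by positivity)
    _ = _ := by ring_nf

/-- There is `C = C(d) > 0` such that for every `u₀ ∈ L²(ℝ^d)`, `T > 0`, `N > 0`,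
`ε ∈ (0,1)` and every family `(λ_n)` with `|λ_n - n/N| ≤ ε/N`,
`(Σ_{n ∈ ℤ^d} |u(T,λ_n) - u(T,n/N)|²)^{1/2}
  ≤ C ε N^{d/2} (1 + (TN²)^{-d/4 - 1/2} e^{-TN²}) ‖u₀‖`. -/
theorem statement12 (d : ℕ) (hd : 0 < d) :
    ∃ C : ℝ, 0 < C ∧
      ∀ u₀ : EuclideanSpace ℝ (Fin d) → ℝ, MemLp u₀ 2 volume →
      ∀ T N ε : ℝ, 0 < T → 0 < N → ε ∈ Set.Ioo (0 : ℝ) 1 →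
      ∀ lam : (Fin d → ℤ) → EuclideanSpace ℝ (Fin d),
        (∀ n, ‖lam n - latticePt d N n‖ ≤ ε / N) →
        (∑' n : Fin d → ℤ,
            (‖heatSol d u₀ T (lam n) - heatSol d u₀ T (latticePt d N n)‖₊ : ℝ≥0∞) ^ 2)
              ^ ((1 : ℝ) / 2)
          ≤ ENNReal.ofReal
              (C * ε * N ^ ((d : ℝ) / 2) *
                (1 + (T * N ^ 2) ^ (-(d : ℝ) / 4 - 1 / 2) * Real.exp (-(T * N ^ 2))) *
                l2norm d u₀) := by
  obtain ⟨C, hC, hbound⟩ := statement12_general (V := EuclideanSpace ℝ (Fin d)) 1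
  refine ⟨C, hC, fun u₀ hu T N ε hT hN hε lam hlam => ?_⟩
  simpa only [heatSol_eq_heatFlow, l2norm, ENNReal.ofReal_mul' ENNReal.toReal_nonneg,
    ENNReal.ofReal_toReal hu.2.ne, finrank_euclideanSpace_fin, enorm_eq_nnnorm] using
    hbound u₀ hu T N ε hT hN (Set.Ioo_subset_Icc_self hε) _ lam (one_div_le_dist_latticePt hN) hlam
end
end

section
/- Let T > 0, let α ∈ ℕ^d be a multi-index and let k ∈ ℕ. For every u₀ ∈ L²(ℝ^d) with ∫_{ℝ^d} (1+|x|)^{2k} |u₀(x)|² dx < ∞, the heat solution u with initial datum u₀ (which is smooth in x for t>0) satisfies ∫_{ℝ^d} (1+|x|)^{2k} |D_x^α u(T,x)|² dx ≤ (2d)^{k+1} (6^k (|α|+k)!)² (1+T)^k T^{−|α|} ∫_{ℝ^d} (1+|x|)^{2k} |u₀(x)|² dx, where D_x^α denotes the partial derivative of multi-order α in the space variable and |α| = α₁+⋯+α_d. -/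
open MeasureTheory Filter Topology Metric ENNReal NNReal

noncomputable section

/-- Partial derivative in the `j`-th coordinate direction. -/
def pderiv' (d : ℕ) (j : Fin d) (f : EuclideanSpace ℝ (Fin d) → ℝ) :
    EuclideanSpace ℝ (Fin d) → ℝ :=
  fun x => fderiv ℝ f x (EuclideanSpace.single j 1)

/-- The partial derivative `D^α` of multi-order `α ∈ ℕ^d`. -/
def mderiv (d : ℕ) (α : Fin d → ℕ) (f : EuclideanSpace ℝ (Fin d) → ℝ) :
    EuclideanSpace ℝ (Fin d) → ℝ :=
  ((List.finRange d).map (fun j => (pderiv' d j)^[α j])).foldr (· ∘ ·) id f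

/-!
Let `G` be the centred Gaussian density on `ℝ^d` with covariance `v • 1`, `v = 2T`, so that
`D^α u(T) = u₀ ⋆ D^α G`. Write `|D^α G|² = (|D^α G|² / G) · G` and apply the Cauchy–Schwarz
inequality to the convolution, distributing the weight by `1 + |x| ≤ (1 + |x - y|) (1 + |y|)`:
`∫ (1+|x|)^{2k} |D^α u|² ≤ (∫ |D^α G|² / G) (∫ (1+|x|)^{2k} G) (∫ (1+|x|)^{2k} |u₀|²)`.
By orthogonality of the Hermite polynomials the first factor equals `α! / v^{|α|}`. For the second,
sacrificing a proportion of order `1/d` of the Gaussian exponent to absorb the weight costs only a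
bounded factor when the `d`-dimensional Gaussian is renormalised.
-/

section Hermite

open Polynomial Asymptotics
open scoped Nat

theorem derivative_hermite_succ (n : ℕ) :
    derivative (hermite (n + 1)) = (n + 1 : ℤ[X]) * hermite n := by
  induction n with
  | zero => simp
  | succ n ih =>
    rw [hermite_succ (n + 1), derivative_sub, derivative_mul, ih, derivative_X, derivative_mul,
      derivative_add, derivative_natCast, derivative_one, hermite_succ n]
    push_cast
    ring

theorem aeval_isBigO_exp_mul_sq {R : Type*} [CommSemiring R] [Algebra R ℝ] (p : R[X]) {c : ℝ}
    (hc : 0 < c) : (fun s : ℝ => aeval s p) =O[⊤] fun s => Real.exp (c * s ^ 2) := by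
  induction p using Polynomial.induction_on' with
  | add p q hp hq => simpa only [map_add] using hp.add hq
  | monomial n a =>
    have abs_le (s : ℝ) : |s| ≤ (4 * c)⁻¹ + c * s ^ 2 := by
      rw [← sq_abs s, ← sub_nonneg]
      have : (4 * c)⁻¹ + c * |s| ^ 2 - |s| = (4 * c)⁻¹ * (2 * c * |s| - 1) ^ 2 := by
        field_simp
        ring
      rw [this]
      positivity
    have pow_isBigO : (fun s : ℝ => s ^ n) =O[⊤] fun s => Real.exp (c * s ^ 2) := by
      refine isBigO_top.2 ⟨n ! * Real.exp (4 * c)⁻¹, fun s => ?_⟩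
      calc ‖s ^ n‖ = n ! * (|s| ^ n / n !) := by
            rw [norm_pow, Real.norm_eq_abs]
            field_simp
        _ ≤ n ! * Real.exp |s| := by
            gcongr
            exact Real.pow_div_factorial_le_exp _ (abs_nonneg s) n
        _ ≤ n ! * Real.exp ((4 * c)⁻¹ + c * s ^ 2) := by gcongr; exact abs_le s
        _ = n ! * Real.exp (4 * c)⁻¹ * ‖Real.exp (c * s ^ 2)‖ := by
            rw [Real.exp_add, Real.norm_eq_abs, Real.abs_exp, mul_assoc]
    simpa only [aeval_monomial] using pow_isBigO.const_mul_left (algebraMap R ℝ a)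

theorem integrable_aeval_mul_exp_neg_mul_sq {R : Type*} [CommSemiring R] [Algebra R ℝ] (p : R[X])
    {b : ℝ} (hb : 0 < b) : Integrable fun s : ℝ => aeval s p * Real.exp (-b * s ^ 2) := by
  have hO : (fun s : ℝ => aeval s p * Real.exp (-b * s ^ 2)) =O[⊤]
      fun s => Real.exp (-(b / 2) * s ^ 2) := by
    refine ((aeval_isBigO_exp_mul_sq p (half_pos hb)).mul
      (isBigO_refl (fun s : ℝ => Real.exp (-b * s ^ 2)) ⊤)).congr_right fun s => ?_
    rw [← Real.exp_add]
    ring_nf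
  exact hO.integrable (by fun_prop) (integrable_exp_neg_mul_sq (half_pos hb))

theorem hasDerivAt_hermite_mul_exp (n : ℕ) (x : ℝ) :
    HasDerivAt (fun x : ℝ => aeval x (hermite n) * Real.exp (-(x ^ 2 / 2)))
      (-(aeval x (hermite (n + 1)) * Real.exp (-(x ^ 2 / 2)))) x := by
  have hexp : HasDerivAt (fun x : ℝ => Real.exp (-(x ^ 2 / 2)))
      (Real.exp (-(x ^ 2 / 2)) * -x) x := by
    simpa using ((hasDerivAt_pow 2 x).div_const 2).neg.exp
  refine (((hermite n).hasDerivAt_aeval x).mul hexp).congr_deriv ?_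
  rw [hermite_succ, map_sub, map_mul, aeval_X]
  ring

theorem integral_hermite_sq_mul_exp (n : ℕ) :
    ∫ x : ℝ, aeval x (hermite n) ^ 2 * Real.exp (-(x ^ 2 / 2)) = n ! * √(2 * Real.pi) := by
  have integrable_mul_exp (p : ℤ[X]) :
      Integrable fun x : ℝ => aeval x p * Real.exp (-(x ^ 2 / 2)) := by
    simpa only [neg_mul, one_div_mul_eq_div] using
      integrable_aeval_mul_exp_neg_mul_sq p (one_half_pos (α := ℝ))
  induction n with
  | zero =>
    simpa [neg_div, div_eq_inv_mul, mul_comm] using integral_gaussian (1 / 2)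
  | succ n ih =>
    have parts := integral_mul_deriv_eq_deriv_mul_of_integrable
      (u := fun x : ℝ => aeval x (hermite (n + 1)))
      (fun x _ => (hermite (n + 1)).hasDerivAt_aeval x)
      (fun x _ => hasDerivAt_hermite_mul_exp n x)
      (((integrable_mul_exp (hermite (n + 1) * hermite (n + 1))).neg).congr (.of_forall fun x => by
        simp [mul_assoc]))
      ((integrable_mul_exp (derivative (hermite (n + 1)) * hermite n)).congr
        (.of_forall fun x => by simp [mul_assoc]))
      ((integrable_mul_exp (hermite (n + 1) * hermite n)).congr (.of_forall fun x => by
        simp [mul_assoc]))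
    calc ∫ x : ℝ, aeval x (hermite (n + 1)) ^ 2 * Real.exp (-(x ^ 2 / 2))
        = -∫ x : ℝ, aeval x (hermite (n + 1)) *
            -(aeval x (hermite (n + 1)) * Real.exp (-(x ^ 2 / 2))) := by
          rw [← integral_neg]
          congr with x
          ring
      _ = ∫ x : ℝ, (n + 1) * (aeval x (hermite n) ^ 2 * Real.exp (-(x ^ 2 / 2))) := by
          rw [parts, neg_neg]
          congr with x
          rw [derivative_hermite_succ]
          simp only [map_mul, map_add, map_natCast, map_one]
          ring
      _ = (n + 1)! * √(2 * Real.pi) := by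
          rw [integral_const_mul, ih, Nat.factorial_succ]
          push_cast
          ring

end Hermite

section Gaussian

open Polynomial Asymptotics ProbabilityTheory
open scoped Nat

theorem gaussianPDFReal_zero_eq (v : ℝ≥0) (s : ℝ) :
    gaussianPDFReal 0 v s = (√(2 * Real.pi * v))⁻¹ * Real.exp (-(((√v)⁻¹ * s) ^ 2 / 2)) := by
  rw [gaussianPDFReal, sub_zero, mul_pow, inv_pow, Real.sq_sqrt v.coe_nonneg]
  congr 2
  ring

theorem contDiff_gaussianPDFReal (μ : ℝ) (v : ℝ≥0) {n : WithTop ℕ∞} :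
    ContDiff ℝ n (gaussianPDFReal μ v) := by
  unfold gaussianPDFReal
  fun_prop

theorem iteratedDeriv_gaussianPDFReal (v : ℝ≥0) (n : ℕ) (s : ℝ) :
    iteratedDeriv n (gaussianPDFReal 0 v) s =
      (-(√v)⁻¹) ^ n * aeval ((√v)⁻¹ * s) (hermite n) * gaussianPDFReal 0 v s := by
  have hcomp := iteratedDeriv_comp_const_mul (n := n) (f := fun y : ℝ => Real.exp (-(y ^ 2 / 2)))
    (by fun_prop) (√v)⁻¹
  simp_rw [funext (gaussianPDFReal_zero_eq v)]
  rw [iteratedDeriv_const_mul_field, hcomp]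
  beta_reduce
  rw [iteratedDeriv_eq_iterate, deriv_gaussian_eq_hermite_mul_gaussian, neg_pow (√v)⁻¹]
  ring

theorem iteratedDeriv_gaussianPDFReal_isBigO (v : ℝ≥0) (n : ℕ) {b : ℝ} (hb : b < (2 * (v : ℝ))⁻¹) :
    iteratedDeriv n (gaussianPDFReal 0 v) =O[⊤] fun s => Real.exp (-b * s ^ 2) := by
  have hpoly : (fun s : ℝ => aeval ((√v)⁻¹ * s) (hermite n)) =O[⊤]
      fun s => Real.exp (((2 * (v : ℝ))⁻¹ - b) * s ^ 2) := by
    let p : ℝ[X] := ((hermite n).map (Int.castRingHom ℝ)).comp (C (√v)⁻¹ * X)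
    exact (aeval_isBigO_exp_mul_sq p (sub_pos.2 hb)).congr_left fun s => by
      simp [p, aeval_def, eval_map]
  have hgauss : gaussianPDFReal 0 v =O[⊤] fun s => Real.exp (-(2 * v : ℝ)⁻¹ * s ^ 2) := by
    refine (isBigO_refl _ ⊤).const_mul_left (√(2 * Real.pi * v))⁻¹ |>.congr_left fun s => ?_
    rw [gaussianPDFReal, sub_zero]
    congr 2
    ring
  refine ((hpoly.const_mul_left ((-(√v)⁻¹) ^ n)).mul hgauss).congr (fun s => ?_) fun s => ?_
  · rw [iteratedDeriv_gaussianPDFReal]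
  · rw [← Real.exp_add]
    ring_nf

theorem iteratedDeriv_gaussianPDFReal_sq_div {v : ℝ≥0} (hv : v ≠ 0) (n : ℕ) (s : ℝ) :
    iteratedDeriv n (gaussianPDFReal 0 v) s ^ 2 / gaussianPDFReal 0 v s =
      (v ^ n * √(2 * Real.pi * v))⁻¹ *
        (aeval ((√v)⁻¹ * s) (hermite n) ^ 2 * Real.exp (-(((√v)⁻¹ * s) ^ 2 / 2))) := by
  have hpos := gaussianPDFReal_pos 0 v s hv
  have hpow : ((-(√v)⁻¹) ^ n) ^ 2 = ((v : ℝ) ^ n)⁻¹ := by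
    rw [← pow_mul, mul_comm n, pow_mul, neg_sq, inv_pow, Real.sq_sqrt v.coe_nonneg, inv_pow]
  calc _ = ((-(√v)⁻¹) ^ n) ^ 2 * aeval ((√v)⁻¹ * s) (hermite n) ^ 2 * gaussianPDFReal 0 v s := by
        rw [iteratedDeriv_gaussianPDFReal]
        field_simp
    _ = _ := by
        rw [hpow, gaussianPDFReal_zero_eq, mul_inv]
        ring

theorem integrable_iteratedDeriv_gaussianPDFReal_sq_div {v : ℝ≥0} (hv : v ≠ 0) (n : ℕ) :
    Integrable fun s =>
      iteratedDeriv n (gaussianPDFReal 0 v) s ^ 2 / gaussianPDFReal 0 v s := by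
  have hv' : (√v)⁻¹ ≠ 0 := by positivity
  simp_rw [iteratedDeriv_gaussianPDFReal_sq_div hv]
  have hermite_sq : Integrable fun x : ℝ => aeval x (hermite n) ^ 2 * Real.exp (-(x ^ 2 / 2)) := by
    refine (integrable_aeval_mul_exp_neg_mul_sq (hermite n ^ 2) one_half_pos).congr
      (.of_forall fun x => ?_)
    dsimp only
    rw [_root_.map_pow, neg_mul, one_div_mul_eq_div]
  exact (hermite_sq.comp_mul_left' hv').const_mul _

theorem integral_iteratedDeriv_gaussianPDFReal_sq_div {v : ℝ≥0} (hv : v ≠ 0) (n : ℕ) :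
    ∫ s, iteratedDeriv n (gaussianPDFReal 0 v) s ^ 2 / gaussianPDFReal 0 v s = n ! / v ^ n := by
  simp_rw [iteratedDeriv_gaussianPDFReal_sq_div hv]
  rw [integral_const_mul, Measure.integral_comp_mul_left
    (fun x : ℝ => aeval x (hermite n) ^ 2 * Real.exp (-(x ^ 2 / 2))), integral_hermite_sq_mul_exp,
    inv_inv, abs_of_nonneg (Real.sqrt_nonneg _), smul_eq_mul, Real.sqrt_mul (by positivity) (v : ℝ)]
  field_simp

end Gaussian

section GaussianKernel

open Asymptotics ProbabilityTheory
open scoped Nat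

variable {ι : Type*} [Fintype ι]

/-- The partial derivative of multi-order `α` of the centred Gaussian density on `ℝ^ι` with
covariance `v • 1`, as a product of one-dimensional derivatives. For `α = 0` and `v = 2 * t` it is
the heat kernel at time `t`. -/
def gaussianPartialDeriv (v : ℝ≥0) (α : ι → ℕ) (z : EuclideanSpace ℝ ι) : ℝ :=
  ∏ j, iteratedDeriv (α j) (gaussianPDFReal 0 v) (z j)

theorem gaussianPartialDeriv_zero (v : ℝ≥0) (z : EuclideanSpace ℝ ι) :
    gaussianPartialDeriv v 0 z =
      (√(2 * Real.pi * v))⁻¹ ^ Fintype.card ι * Real.exp (-‖z‖ ^ 2 / (2 * v)) := by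
  simp only [gaussianPartialDeriv, Pi.zero_apply, iteratedDeriv_zero, gaussianPDFReal, sub_zero]
  rw [Finset.prod_mul_distrib, ← Real.exp_sum, ← Finset.sum_div, Finset.sum_neg_distrib,
    ← EuclideanSpace.real_norm_sq_eq, Finset.prod_const, Finset.card_univ]

theorem gaussianPartialDeriv_zero_pos {v : ℝ≥0} (hv : v ≠ 0) (z : EuclideanSpace ℝ ι) :
    0 < gaussianPartialDeriv v 0 z := by
  simpa only [gaussianPartialDeriv, Pi.zero_apply, iteratedDeriv_zero] using
    Finset.prod_pos fun j _ => gaussianPDFReal_pos 0 v (z j) hv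

theorem gaussianPartialDeriv_isBigO (v : ℝ≥0) (α : ι → ℕ) {b : ℝ} (hb : b < (2 * (v : ℝ))⁻¹) :
    (gaussianPartialDeriv v α) =O[⊤] fun z => Real.exp (-b * ‖z‖ ^ 2) := by
  refine (IsBigO.finsetProd (s := Finset.univ) fun j _ =>
    (iteratedDeriv_gaussianPDFReal_isBigO v (α j) hb).comp_tendsto
      (tendsto_top (f := fun z : EuclideanSpace ℝ ι => z j))).congr_right fun z => ?_
  simp only [Function.comp_apply]
  rw [← Real.exp_sum, ← Finset.mul_sum, EuclideanSpace.real_norm_sq_eq]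

theorem hasFDerivAt_gaussianPartialDeriv [DecidableEq ι] (v : ℝ≥0) (α : ι → ℕ)
    (z : EuclideanSpace ℝ ι) :
    HasFDerivAt (gaussianPartialDeriv v α)
      (∑ i, gaussianPartialDeriv v (α + Pi.single i 1) z • EuclideanSpace.proj (𝕜 := ℝ) i) z := by
  have hasFDerivAt_factor (j : ι) : HasFDerivAt
      (fun z : EuclideanSpace ℝ ι => iteratedDeriv (α j) (gaussianPDFReal 0 v) (z j))
      (iteratedDeriv (α j + 1) (gaussianPDFReal 0 v) (z j) • EuclideanSpace.proj (𝕜 := ℝ) j) z := by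
    have hderiv : HasDerivAt (iteratedDeriv (α j) (gaussianPDFReal 0 v))
        (iteratedDeriv (α j + 1) (gaussianPDFReal 0 v) (z j)) (z j) := by
      rw [iteratedDeriv_succ]
      exact ((contDiff_gaussianPDFReal 0 v).differentiable_iteratedDeriv (α j)
        (WithTop.coe_lt_top _) _).hasDerivAt
    exact hderiv.comp_hasFDerivAt z (EuclideanSpace.proj (𝕜 := ℝ) j).hasFDerivAt
  refine (HasFDerivAt.finsetProd fun j _ => hasFDerivAt_factor j).congr_fderiv ?_
  refine Finset.sum_congr rfl fun i _ => ?_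
  rw [smul_smul, gaussianPartialDeriv, ← Finset.prod_erase_mul _ _ (Finset.mem_univ i)]
  congr 2
  · refine Finset.prod_congr rfl fun j hj => ?_
    simp [Finset.ne_of_mem_erase hj]
  · simp

theorem continuous_gaussianPartialDeriv (v : ℝ≥0) (α : ι → ℕ) :
    Continuous (gaussianPartialDeriv v α) := by
  classical
  exact continuous_iff_continuousAt.2 fun z => (hasFDerivAt_gaussianPartialDeriv v α z).continuousAt

theorem lintegral_gaussianPartialDeriv_sq_div {v : ℝ≥0} (hv : v ≠ 0) (α : ι → ℕ) :
    ∫⁻ z, ENNReal.ofReal (gaussianPartialDeriv v α z ^ 2 / gaussianPartialDeriv v 0 z) =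
      ENNReal.ofReal (∏ j, (α j)! / (v : ℝ) ^ α j) := by
  let ratio (n : ℕ) (s : ℝ) : ℝ :=
    iteratedDeriv n (gaussianPDFReal 0 v) s ^ 2 / gaussianPDFReal 0 v s
  have ratio_nonneg (n : ℕ) (s : ℝ) : 0 ≤ ratio n s :=
    div_nonneg (sq_nonneg _) (gaussianPDFReal_nonneg 0 v s)
  have eq_prod (z : EuclideanSpace ℝ ι) :
      gaussianPartialDeriv v α z ^ 2 / gaussianPartialDeriv v 0 z = ∏ j, ratio (α j) (z j) := by
    simp only [gaussianPartialDeriv, ratio, Finset.prod_div_distrib, Finset.prod_pow,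
      Pi.zero_apply, iteratedDeriv_zero]
  calc ∫⁻ z, ENNReal.ofReal (gaussianPartialDeriv v α z ^ 2 / gaussianPartialDeriv v 0 z)
      = ∫⁻ z : ι → ℝ, ENNReal.ofReal (∏ j, ratio (α j) (z j)) := by
        simp_rw [eq_prod]
        exact ((PiLp.volume_preserving_toLp ι).lintegral_comp_emb
          (MeasurableEquiv.toLp 2 (ι → ℝ)).measurableEmbedding _).symm
    _ = ENNReal.ofReal (∫ z : ι → ℝ, ∏ j, ratio (α j) (z j)) :=
        (ofReal_integral_eq_lintegral_ofReal
          (Integrable.fintype_prod (f := fun j => ratio (α j)) fun j =>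
            integrable_iteratedDeriv_gaussianPDFReal_sq_div hv (α j))
          (.of_forall fun z => Finset.prod_nonneg fun j _ => ratio_nonneg _ _)).symm
    _ = ENNReal.ofReal (∏ j, (α j)! / (v : ℝ) ^ α j) := by
        rw [integral_fintype_prod_volume_eq_prod (f := fun j => ratio (α j))]
        simp_rw [ratio, integral_iteratedDeriv_gaussianPDFReal_sq_div hv]

theorem lintegral_gaussianPartialDeriv_zero {v : ℝ≥0} (hv : v ≠ 0) :
    ∫⁻ z : EuclideanSpace ℝ ι, ENNReal.ofReal (gaussianPartialDeriv v 0 z) = 1 := by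
  have sq_div_self (z : EuclideanSpace ℝ ι) :
      gaussianPartialDeriv v 0 z ^ 2 / gaussianPartialDeriv v 0 z = gaussianPartialDeriv v 0 z := by
    rw [sq, mul_self_div_self]
  simpa [sq_div_self] using lintegral_gaussianPartialDeriv_sq_div hv (0 : ι → ℕ)

theorem one_add_pow_mul_exp_le {v c r : ℝ} (hv : 0 < v) (hc : 0 < c) (k : ℕ) :
    (1 + r) ^ (2 * k) * Real.exp (-r ^ 2 / (2 * v)) ≤
      k ! * (c⁻¹ * (1 + v)) ^ k * Real.exp c * Real.exp (-(1 - 2 * c) * r ^ 2 / (2 * v)) := by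
  have sq_le : (1 + r) ^ 2 ≤ (1 + v) * (1 + r ^ 2 / v) := by
    have : (1 + v) * (1 + r ^ 2 / v) - (1 + r) ^ 2 = (v - r) ^ 2 / v := by
      field_simp
      ring
    rw [← sub_nonneg, this]
    positivity
  have pow_le := Real.pow_div_factorial_le_exp (c * (1 + r ^ 2 / v)) (by positivity) k
  rw [div_le_iff₀' (by positivity)] at pow_le
  calc (1 + r) ^ (2 * k) * Real.exp (-r ^ 2 / (2 * v))
      ≤ ((1 + v) * (1 + r ^ 2 / v)) ^ k * Real.exp (-r ^ 2 / (2 * v)) := by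
        rw [pow_mul]
        gcongr
    _ = (c⁻¹ * (1 + v)) ^ k * (c * (1 + r ^ 2 / v)) ^ k * Real.exp (-r ^ 2 / (2 * v)) := by
        rw [← mul_pow]
        field_simp
    _ ≤ (c⁻¹ * (1 + v)) ^ k * (k ! * Real.exp (c * (1 + r ^ 2 / v))) *
          Real.exp (-r ^ 2 / (2 * v)) := by gcongr
    _ = _ := by
        have : c * (1 + r ^ 2 / v) + -r ^ 2 / (2 * v) = c + -(1 - 2 * c) * r ^ 2 / (2 * v) := by
          field_simp
          ring
        rw [mul_assoc _ (_ * _), mul_assoc _ (Real.exp _), ← Real.exp_add, this, Real.exp_add]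
        ring

/-- Trading a fraction of the Gaussian decay for the polynomial weight widens the variance. -/
theorem one_add_norm_pow_mul_gaussianPartialDeriv_zero_le {v w : ℝ≥0} {c : ℝ} (hv : v ≠ 0)
    (hc : 0 < c) (hw : v = (1 - 2 * c) * w) (k : ℕ) (z : EuclideanSpace ℝ ι) :
    (1 + ‖z‖) ^ (2 * k) * gaussianPartialDeriv v 0 z ≤
      k ! * (c⁻¹ * (1 + v)) ^ k * (Real.exp c * √((1 - 2 * c)⁻¹) ^ Fintype.card ι) *
        gaussianPartialDeriv w 0 z := by
  have hv' : 0 < (v : ℝ) := by positivity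
  have hc' : 0 < 1 - 2 * c := pos_of_mul_pos_left (hw ▸ hv') w.coe_nonneg
  have hw' : (w : ℝ) = (1 - 2 * c)⁻¹ * v := by rw [hw, inv_mul_cancel_left₀ hc'.ne']
  have normalisation : (√(2 * Real.pi * v))⁻¹ = √((1 - 2 * c)⁻¹) * (√(2 * Real.pi * w))⁻¹ := by
    rw [hw', mul_left_comm, Real.sqrt_mul (inv_nonneg.2 hc'.le), mul_inv, mul_inv_cancel_left₀]
    positivity
  have exponent : -(1 - 2 * c) * ‖z‖ ^ 2 / (2 * v) = -‖z‖ ^ 2 / (2 * w) := by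
    rw [hw']
    field_simp
  calc (1 + ‖z‖) ^ (2 * k) * gaussianPartialDeriv v 0 z
      = (√(2 * Real.pi * v))⁻¹ ^ Fintype.card ι *
          ((1 + ‖z‖) ^ (2 * k) * Real.exp (-‖z‖ ^ 2 / (2 * v))) := by
        rw [gaussianPartialDeriv_zero]
        ring
    _ ≤ (√(2 * Real.pi * v))⁻¹ ^ Fintype.card ι * (k ! * (c⁻¹ * (1 + v)) ^ k * Real.exp c *
          Real.exp (-(1 - 2 * c) * ‖z‖ ^ 2 / (2 * v))) := by
        exact mul_le_mul_of_nonneg_left (one_add_pow_mul_exp_le hv' hc k) (by positivity)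
    _ = _ := by
        rw [gaussianPartialDeriv_zero, exponent, normalisation, mul_pow]
        ring

theorem exp_mul_sqrt_pow_le_two {d : ℕ} (hd : d ≠ 0) :
    Real.exp (8 * d : ℝ)⁻¹ * √((1 - 2 * (8 * d : ℝ)⁻¹)⁻¹) ^ d ≤ 2 := by
  have one_le : (1 : ℝ) ≤ d := Nat.one_le_cast.2 (Nat.one_le_iff_ne_zero.2 hd)
  have le_eighth : (8 * d : ℝ)⁻¹ ≤ 1 / 8 := by
    rw [mul_inv, one_div]
    exact mul_le_of_le_one_right (by norm_num) (inv_le_one_of_one_le₀ one_le)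
  have exp_le : Real.exp (8 * d : ℝ)⁻¹ ≤ 8 / 7 :=
    (Real.exp_bound_div_one_sub_of_interval (by positivity) (by linarith)).trans <| by
      rw [div_le_div_iff₀ (by linarith) (by norm_num)]
      linarith
  have bernoulli : 3 / 4 ≤ (1 - 2 * (8 * d : ℝ)⁻¹) ^ d := by
    have h := one_add_mul_le_pow (a := -(2 * (8 * d : ℝ)⁻¹)) (by linarith) d
    rw [← sub_eq_add_neg] at h
    refine le_of_eq_of_le ?_ h
    field_simp
    norm_num
  have sqrt_le : √((1 - 2 * (8 * d : ℝ)⁻¹)⁻¹) ^ d ≤ 7 / 4 := by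
    refine (sq_le_sq₀ (by positivity) (by norm_num)).1 ?_
    rw [pow_right_comm, Real.sq_sqrt (inv_nonneg.2 (by linarith)), inv_pow]
    exact (inv_anti₀ (by norm_num) bernoulli).trans (by norm_num)
  calc _ ≤ (8 / 7 : ℝ) * (7 / 4) := by gcongr
    _ = 2 := by norm_num

theorem lintegral_one_add_norm_pow_mul_gaussianPartialDeriv_zero_le [Nonempty ι] {v : ℝ≥0}
    (hv : v ≠ 0) (k : ℕ) :
    ∫⁻ z : EuclideanSpace ℝ ι, ENNReal.ofReal ((1 + ‖z‖) ^ (2 * k) * gaussianPartialDeriv v 0 z) ≤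
      ENNReal.ofReal (k ! * (8 * Fintype.card ι * (1 + v)) ^ k * 2) := by
  let c : ℝ := (8 * Fintype.card ι : ℝ)⁻¹
  have c_pos : 0 < c := by positivity
  have one_sub_pos : 0 < 1 - 2 * c := by
    have one_le : (1 : ℝ) ≤ Fintype.card ι := Nat.one_le_cast.2 Fintype.card_pos
    rw [sub_pos, ← div_eq_mul_inv, div_lt_one (by positivity)]
    linarith
  let w : ℝ≥0 := v / (1 - 2 * c).toNNReal
  have hw : (v : ℝ) = (1 - 2 * c) * w := by
    rw [NNReal.coe_div, Real.coe_toNNReal _ one_sub_pos.le, mul_div_cancel₀ _ one_sub_pos.ne']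
  have w_ne_zero : w ≠ 0 := div_ne_zero hv (Real.toNNReal_pos.2 one_sub_pos).ne'
  calc _ ≤ ∫⁻ z : EuclideanSpace ℝ ι,
          ENNReal.ofReal (k ! * (8 * Fintype.card ι * (1 + v)) ^ k * 2) *
            ENNReal.ofReal (gaussianPartialDeriv w 0 z) := by
        gcongr with z
        rw [← ENNReal.ofReal_mul (by positivity)]
        refine ENNReal.ofReal_le_ofReal
          ((one_add_norm_pow_mul_gaussianPartialDeriv_zero_le hv c_pos hw k z).trans ?_)
        have pos := gaussianPartialDeriv_zero_pos w_ne_zero z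
        rw [inv_inv]
        gcongr
        exact exp_mul_sqrt_pow_le_two Fintype.card_ne_zero
    _ = _ := by
        rw [lintegral_const_mul' _ _ ENNReal.ofReal_ne_top,
          lintegral_gaussianPartialDeriv_zero w_ne_zero, mul_one]

end GaussianKernel

section Convolution

open Asymptotics
open scoped Convolution

section GaussianBound

variable {E F : Type*} [NormedAddCommGroup E] [NormedAddCommGroup F] [NormedSpace ℝ F]
  {K : E → F} {b : ℝ} {x₀ : E}

theorem exp_neg_mul_norm_sub_sq_le (hb : 0 ≤ b) {x : E} (hx : x ∈ ball x₀ 1) (y : E) :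
    Real.exp (-b * ‖x - y‖ ^ 2) ≤ Real.exp b * Real.exp (-(b / 2) * ‖x₀ - y‖ ^ 2) := by
  have triangle : ‖x₀ - y‖ ≤ 1 + ‖x - y‖ := by
    refine (norm_sub_le_norm_sub_add_norm_sub x₀ x y).trans (add_le_add_left ?_ _)
    exact (mem_ball_iff_norm'.1 hx).le
  have sq_le : ‖x₀ - y‖ ^ 2 ≤ 2 * (1 + ‖x - y‖ ^ 2) := by
    calc ‖x₀ - y‖ ^ 2 ≤ (1 + ‖x - y‖) ^ 2 := by gcongr
      _ ≤ 2 * (1 ^ 2 + ‖x - y‖ ^ 2) := add_sq_le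
      _ = 2 * (1 + ‖x - y‖ ^ 2) := by rw [one_pow]
  rw [← Real.exp_add, Real.exp_le_exp]
  linarith [mul_le_mul_of_nonneg_left sq_le hb]

theorem exists_norm_smul_comp_sub_le (hb : 0 ≤ b)
    (hK : K =O[⊤] fun z => Real.exp (-b * ‖z‖ ^ 2)) (u : E → ℝ) (x₀ : E) :
    ∃ C, ∀ x ∈ ball x₀ 1, ∀ y,
      ‖u y • K (x - y)‖ ≤ C * ‖Real.exp (-(b / 2) * ‖x₀ - y‖ ^ 2) * u y‖ := by
  obtain ⟨C, hC, hKC⟩ := hK.exists_nonneg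
  refine ⟨C * Real.exp b, fun x hx y => ?_⟩
  calc ‖u y • K (x - y)‖ ≤ ‖u y‖ * (C * Real.exp (-b * ‖x - y‖ ^ 2)) := by
        rw [norm_smul]
        gcongr
        simpa only [Real.norm_eq_abs, Real.abs_exp] using isBigOWith_top.1 hKC (x - y)
    _ ≤ ‖u y‖ * (C * (Real.exp b * Real.exp (-(b / 2) * ‖x₀ - y‖ ^ 2))) := by
        gcongr
        exact exp_neg_mul_norm_sub_sq_le hb hx y
    _ = _ := by
        rw [norm_mul, Real.norm_eq_abs (Real.exp _), Real.abs_exp]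
        ring

variable [SecondCountableTopology E] [MeasurableSpace E] [BorelSpace E] {μ : Measure E} {u : E → ℝ}

theorem aestronglyMeasurable_smul_comp_sub (hK : Continuous K)
    (hu : Integrable (fun y => Real.exp (-(b / 2) * ‖x₀ - y‖ ^ 2) * u y) μ) (x : E) :
    AEStronglyMeasurable (fun y => u y • K (x - y)) μ := by
  have hu_meas : AEStronglyMeasurable u μ := by
    have hexp : Continuous fun y => Real.exp (b / 2 * ‖x₀ - y‖ ^ 2) := by fun_prop
    refine (hexp.aestronglyMeasurable.mul hu.1).congr (.of_forall fun y => ?_)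
    rw [Pi.mul_apply, ← mul_assoc, ← Real.exp_add, neg_mul, add_neg_cancel, Real.exp_zero, one_mul]
  exact hu_meas.smul (Continuous.aestronglyMeasurable (by fun_prop))

theorem convolutionExistsAt_of_isBigO_exp_neg_mul_norm_sq (hb : 0 ≤ b) (hK : Continuous K)
    (hKO : K =O[⊤] fun z => Real.exp (-b * ‖z‖ ^ 2))
    (hu : Integrable (fun y => Real.exp (-(b / 2) * ‖x₀ - y‖ ^ 2) * u y) μ) :
    ConvolutionExistsAt u K x₀ (ContinuousLinearMap.lsmul ℝ ℝ) μ := by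
  obtain ⟨C, hC⟩ := exists_norm_smul_comp_sub_le hb hKO u x₀
  exact (hu.norm.const_mul C).mono' (aestronglyMeasurable_smul_comp_sub hK hu x₀)
    (.of_forall (hC x₀ (mem_ball_self one_pos)))

variable [NormedSpace ℝ E] {K' : E → E →L[ℝ] F}

theorem hasFDerivAt_convolution_of_isBigO_exp_neg_mul_norm_sq (hb : 0 ≤ b)
    (hK : ∀ z, HasFDerivAt K (K' z) z) (hK' : Continuous K')
    (hKO : K =O[⊤] fun z => Real.exp (-b * ‖z‖ ^ 2))
    (hKO' : K' =O[⊤] fun z => Real.exp (-b * ‖z‖ ^ 2))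
    (hu : Integrable (fun y => Real.exp (-(b / 2) * ‖x₀ - y‖ ^ 2) * u y) μ) :
    HasFDerivAt (u ⋆[ContinuousLinearMap.lsmul ℝ ℝ, μ] K)
      ((u ⋆[ContinuousLinearMap.lsmul ℝ ℝ, μ] K') x₀) x₀ := by
  have hK_cont : Continuous K := continuous_iff_continuousAt.2 fun z => (hK z).continuousAt
  obtain ⟨C, hC⟩ := exists_norm_smul_comp_sub_le hb hKO' u x₀
  exact hasFDerivAt_integral_of_dominated_of_fderiv_le (ball_mem_nhds x₀ one_pos)
    (.of_forall (aestronglyMeasurable_smul_comp_sub hK_cont hu))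
    (convolutionExistsAt_of_isBigO_exp_neg_mul_norm_sq hb hK_cont hKO hu)
    (aestronglyMeasurable_smul_comp_sub hK' hu x₀)
    (.of_forall fun y x hx => hC x hx y) (hu.norm.const_mul C)
    (.of_forall fun y x _ => ((hasFDerivAt_comp_sub y).2 (hK (x - y))).const_smul (u y))

end GaussianBound

theorem integrable_exp_neg_mul_norm_sub_sq_mul {V : Type*} [NormedAddCommGroup V]
    [InnerProductSpace ℝ V] [FiniteDimensional ℝ V] [MeasurableSpace V] [BorelSpace V] {u : V → ℝ}
    (hu : MemLp u 2) {b : ℝ} (hb : 0 < b) (x : V) :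
    Integrable fun y => Real.exp (-b * ‖x - y‖ ^ 2) * u y := by
  have integrable_gaussian : Integrable fun z : V => Real.exp (-(2 * b) * ‖z‖ ^ 2) := by
    have h := (GaussianFourier.integrable_cexp_neg_mul_sq_norm_add (V := V)
      (b := ((2 * b : ℝ) : ℂ)) (by simpa using hb) 0 0).norm
    refine h.congr (.of_forall fun z => ?_)
    simp [Complex.norm_exp, ← Complex.ofReal_pow]
  have memLp_gaussian : MemLp (fun y => Real.exp (-b * ‖x - y‖ ^ 2)) 2 := by
    rw [memLp_two_iff_integrable_sq (Continuous.aestronglyMeasurable (by fun_prop))]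
    refine (integrable_gaussian.comp_sub_left x).congr (.of_forall fun y => ?_)
    dsimp only
    rw [← Real.exp_nat_mul]
    ring_nf
  exact memLp_gaussian.integrable_mul hu

section GaussianKernel

variable {ι : Type*} [Fintype ι] {v : ℝ≥0} {u : EuclideanSpace ℝ ι → ℝ}

theorem convolutionExistsAt_gaussianPartialDeriv (hv : v ≠ 0) (hu : MemLp u 2) (α : ι → ℕ)
    (x : EuclideanSpace ℝ ι) :
    ConvolutionExistsAt u (gaussianPartialDeriv v α) x (ContinuousLinearMap.lsmul ℝ ℝ) := by
  have hb : 0 < (4 * (v : ℝ))⁻¹ := by positivity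
  exact convolutionExistsAt_of_isBigO_exp_neg_mul_norm_sq hb.le
    (continuous_gaussianPartialDeriv v α) (gaussianPartialDeriv_isBigO v α (by gcongr; norm_num))
    (integrable_exp_neg_mul_norm_sub_sq_mul hu (half_pos hb) x)

theorem hasFDerivAt_convolution_gaussianPartialDeriv [DecidableEq ι] (hv : v ≠ 0)
    (hu : MemLp u 2) (α : ι → ℕ) (x : EuclideanSpace ℝ ι) :
    HasFDerivAt (u ⋆ gaussianPartialDeriv v α)
      (∑ i, (u ⋆ gaussianPartialDeriv v (α + Pi.single i 1)) x • EuclideanSpace.proj (𝕜 := ℝ) i)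
      x := by
  have hb : 0 < (4 * (v : ℝ))⁻¹ := by positivity
  have isBigO (β : ι → ℕ) : gaussianPartialDeriv v β =O[⊤]
      fun z => Real.exp (-(4 * (v : ℝ))⁻¹ * ‖z‖ ^ 2) :=
    gaussianPartialDeriv_isBigO v β (by gcongr; norm_num)
  refine (hasFDerivAt_convolution_of_isBigO_exp_neg_mul_norm_sq hb.le
    (hasFDerivAt_gaussianPartialDeriv v α) ?_ (isBigO α) ?_
    (integrable_exp_neg_mul_norm_sub_sq_mul hu (half_pos hb) x)).congr_fderiv ?_
  · exact continuous_finsetSum _ fun i _ =>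
      (continuous_gaussianPartialDeriv v (α + Pi.single i 1)).smul continuous_const
  · refine IsBigO.fun_sum fun i _ => ?_
    simpa only [smul_eq_mul, mul_one] using (isBigO (α + Pi.single i 1)).smul
      (isBigO_const_const (EuclideanSpace.proj i : EuclideanSpace ℝ ι →L[ℝ] ℝ)
        (one_ne_zero (α := ℝ)) ⊤)
  · simp only [convolution, ContinuousLinearMap.lsmul_apply, Finset.smul_sum, ← smul_assoc]
    rw [integral_finsetSum]
    · simp only [integral_smul_const]
    · exact fun i _ =>
        (convolutionExistsAt_gaussianPartialDeriv hv hu (α + Pi.single i 1) x).smul_const _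

end GaussianKernel

end Convolution

section HeatSolution

open scoped Convolution

variable {d : ℕ} {v : ℝ≥0} {u : EuclideanSpace ℝ (Fin d) → ℝ}

theorem pderiv'_convolution_gaussianPartialDeriv (hv : v ≠ 0) (hu : MemLp u 2) (α : Fin d → ℕ)
    (j : Fin d) :
    pderiv' d j (u ⋆ gaussianPartialDeriv v α) =
      u ⋆ gaussianPartialDeriv v (α + Pi.single j 1) := by
  funext x
  rw [pderiv', (hasFDerivAt_convolution_gaussianPartialDeriv hv hu α x).fderiv]
  simp

theorem pderiv'_iterate_convolution_gaussianPartialDeriv (hv : v ≠ 0) (hu : MemLp u 2)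
    (α : Fin d → ℕ) (j : Fin d) (n : ℕ) :
    (pderiv' d j)^[n] (u ⋆ gaussianPartialDeriv v α) =
      u ⋆ gaussianPartialDeriv v (α + Pi.single j n) := by
  induction n with
  | zero => rw [Function.iterate_zero_apply, Pi.single_zero, add_zero]
  | succ n ih =>
    rw [Function.iterate_succ_apply', ih, pderiv'_convolution_gaussianPartialDeriv hv hu,
      add_assoc, ← Pi.single_add]

theorem mderiv_convolution_gaussianPartialDeriv (hv : v ≠ 0) (hu : MemLp u 2) (α : Fin d → ℕ) :
    mderiv d α (u ⋆ gaussianPartialDeriv v 0) = u ⋆ gaussianPartialDeriv v α := by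
  have foldr_eq (l : List (Fin d)) :
      (l.map fun j => (pderiv' d j)^[α j]).foldr (· ∘ ·) id (u ⋆ gaussianPartialDeriv v 0) =
        u ⋆ gaussianPartialDeriv v (l.map fun j => Pi.single j (α j)).sum := by
    induction l with
    | nil => rfl
    | cons j l ih =>
      rw [List.map_cons, List.foldr_cons, Function.comp_apply, ih, List.map_cons, List.sum_cons,
        pderiv'_iterate_convolution_gaussianPartialDeriv hv hu, add_comm]
  rw [mderiv, foldr_eq, ← List.ofFn_eq_map, List.sum_ofFn, Finset.univ_sum_single]

theorem heatSol_eq_convolution (v : ℝ≥0) (u : EuclideanSpace ℝ (Fin d) → ℝ) :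
    heatSol d u (v / 2) = u ⋆ gaussianPartialDeriv v 0 := by
  have prefactor : (4 * Real.pi * (v / 2)) ^ (-(d : ℝ) / 2) = (√(2 * Real.pi * v))⁻¹ ^ d := by
    rw [show 4 * Real.pi * (v / 2) = 2 * Real.pi * (v : ℝ) by ring, inv_pow, neg_div,
      Real.rpow_neg (by positivity), Real.rpow_div_two_eq_sqrt _ (by positivity),
      Real.rpow_natCast]
  funext x
  simp only [heatSol, convolution, ContinuousLinearMap.lsmul_apply, smul_eq_mul,
    gaussianPartialDeriv_zero, Fintype.card_fin, prefactor]
  rw [← integral_const_mul]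
  congr with y
  rw [show 4 * ((v : ℝ) / 2) = 2 * v by ring]
  ring

theorem mderiv_heatSol {T : ℝ} (hT : 0 < T) (hu : MemLp u 2) (α : Fin d → ℕ) :
    mderiv d α (heatSol d u T) = u ⋆ gaussianPartialDeriv (2 * T).toNNReal α := by
  have hv : (2 * T).toNNReal ≠ 0 := (Real.toNNReal_pos.2 (by positivity)).ne'
  have hT_eq : T = (2 * T).toNNReal / 2 := by
    rw [Real.coe_toNNReal _ (by positivity), mul_div_cancel_left₀ T two_ne_zero]
  conv_lhs => rw [hT_eq]
  rw [heatSol_eq_convolution, mderiv_convolution_gaussianPartialDeriv hv hu]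

end HeatSolution

section WeightedYoung

theorem sq_lintegral_le_lintegral_mul_lintegral {X : Type*} [MeasurableSpace X] {μ : Measure X}
    {r f g : X → ℝ≥0∞} (hf : AEMeasurable f μ) (hg : AEMeasurable g μ)
    (hr : ∀ x, r x ^ 2 ≤ f x * g x) : (∫⁻ x, r x ∂μ) ^ 2 ≤ (∫⁻ x, f x ∂μ) * ∫⁻ x, g x ∂μ := by
  have sq_rpow_half (a : ℝ≥0∞) : (a ^ (2⁻¹ : ℝ)) ^ 2 = a := by
    rw [← ENNReal.rpow_mul_natCast]
    norm_num
  have r_le (x : X) : r x ≤ f x ^ (2⁻¹ : ℝ) * g x ^ (2⁻¹ : ℝ) := by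
    rw [← ENNReal.pow_le_pow_left_iff two_ne_zero, mul_pow, sq_rpow_half, sq_rpow_half]
    exact hr x
  calc (∫⁻ x, r x ∂μ) ^ 2
      ≤ ((∫⁻ x, f x ∂μ) ^ (2⁻¹ : ℝ) * (∫⁻ x, g x ∂μ) ^ (2⁻¹ : ℝ)) ^ 2 := by
        gcongr
        exact (lintegral_mono r_le).trans
          (ENNReal.lintegral_mul_norm_pow_le hf hg (by norm_num) (by norm_num) (by norm_num))
    _ = (∫⁻ x, f x ∂μ) * ∫⁻ x, g x ∂μ := by rw [mul_pow, sq_rpow_half, sq_rpow_half]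

variable {G : Type*} [MeasurableSpace G] [AddCommGroup G] {μ : Measure G}

theorem mul_lconvolution_le {ρ : G → ℝ≥0∞} (hρ : ∀ x y, ρ (x + y) ≤ ρ x * ρ y)
    (f g : G → ℝ≥0∞) (x : G) : ρ x * (f ⋆ₗ[μ] g) x ≤ ((ρ * f) ⋆ₗ[μ] (ρ * g)) x := by
  refine (lintegral_const_mul_le _ _).trans (lintegral_mono fun y => ?_)
  calc ρ x * (f y * g (-y + x)) ≤ ρ y * ρ (-y + x) * (f y * g (-y + x)) := by
        gcongr
        simpa only [add_neg_cancel_left] using hρ y (-y + x)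
    _ = _ := by
        simp only [Pi.mul_apply]
        ring

variable [MeasurableAdd₂ G] [MeasurableNeg G] [SFinite μ] [μ.IsAddLeftInvariant]

theorem lintegral_lconvolution {f g : G → ℝ≥0∞} (hf : AEMeasurable f μ) (hg : AEMeasurable g μ) :
    ∫⁻ x, (f ⋆ₗ[μ] g) x ∂μ = (∫⁻ x, f x ∂μ) * ∫⁻ x, g x ∂μ := by
  simp only [lconvolution_def]
  rw [lintegral_lintegral_swap (by fun_prop), ← lintegral_mul_const'' _ hf]
  refine lintegral_congr fun y => ?_
  rw [lintegral_const_mul'' _ (by fun_prop), lintegral_add_left_eq_self g]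

theorem lintegral_lconvolution_sq_le [μ.IsNegInvariant] {v K p q : G → ℝ≥0∞}
    (hv : AEMeasurable v μ) (hp : AEMeasurable p μ) (hq : AEMeasurable q μ)
    (hK : ∀ x, K x ^ 2 ≤ p x * q x) :
    ∫⁻ x, (v ⋆ₗ[μ] K) x ^ 2 ∂μ ≤ (∫⁻ x, p x ∂μ) * (∫⁻ x, q x ∂μ) * ∫⁻ x, v x ^ 2 ∂μ := by
  have hv_sq : AEMeasurable (v ^ 2) μ := hv.pow_const 2
  have cauchy_schwarz (x : G) :
      (v ⋆ₗ[μ] K) x ^ 2 ≤ (∫⁻ y, p (-y + x) ∂μ) * ((v ^ 2) ⋆ₗ[μ] q) x := by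
    simp only [lconvolution_def, Pi.pow_apply]
    refine sq_lintegral_le_lintegral_mul_lintegral (by fun_prop) (by fun_prop) fun y => ?_
    rw [mul_pow, mul_left_comm]
    gcongr
    exact hK _
  have translate (x : G) : ∫⁻ y, p (-y + x) ∂μ = ∫⁻ y, p y ∂μ := by
    simp_rw [neg_add_eq_sub]
    exact lintegral_sub_left_eq_self p x
  calc ∫⁻ x, (v ⋆ₗ[μ] K) x ^ 2 ∂μ
      ≤ ∫⁻ x, (∫⁻ y, p y ∂μ) * ((v ^ 2) ⋆ₗ[μ] q) x ∂μ :=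
        lintegral_mono fun x => translate x ▸ cauchy_schwarz x
    _ = _ := by
        rw [lintegral_const_mul'' _ (by fun_prop), lintegral_lconvolution hv_sq hq,
          mul_comm (∫⁻ x, (v ^ 2) x ∂μ), mul_assoc]
        rfl

end WeightedYoung

section WeightedEstimate

open scoped Convolution Nat

theorem enorm_convolution_lsmul_le {G F : Type*} [MeasurableSpace G] [AddCommGroup G]
    [NormedAddCommGroup F] [NormedSpace ℝ F] {μ : Measure G} (u : G → ℝ) (K : G → F) (x : G) :
    ‖(u ⋆[ContinuousLinearMap.lsmul ℝ ℝ, μ] K) x‖ₑ ≤ ((‖u ·‖ₑ) ⋆ₗ[μ] (‖K ·‖ₑ)) x := by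
  refine (enorm_integral_le_lintegral_enorm _).trans_eq (lintegral_congr fun y => ?_)
  rw [ContinuousLinearMap.lsmul_apply, enorm_smul, neg_add_eq_sub]

theorem ofReal_one_add_norm_pow_mul_sq {E : Type*} [NormedAddCommGroup E] (k : ℕ) (x : E) (s : ℝ) :
    ENNReal.ofReal ((1 + ‖x‖) ^ (2 * k) * s ^ 2) =
      (ENNReal.ofReal ((1 + ‖x‖) ^ k) * ‖s‖ₑ) ^ 2 := by
  rw [← ofReal_norm, ← ENNReal.ofReal_mul (by positivity), ← ENNReal.ofReal_pow (by positivity),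
    mul_pow, ← pow_mul, mul_comm k, Real.norm_eq_abs, sq_abs]

theorem ofReal_one_add_norm_pow_submultiplicative {E : Type*} [NormedAddCommGroup E] (k : ℕ)
    (x y : E) :
    ENNReal.ofReal ((1 + ‖x + y‖) ^ k) ≤
      ENNReal.ofReal ((1 + ‖x‖) ^ k) * ENNReal.ofReal ((1 + ‖y‖) ^ k) := by
  rw [← ENNReal.ofReal_mul (by positivity), ← mul_pow]
  gcongr
  calc 1 + ‖x + y‖ ≤ 1 + (‖x‖ + ‖y‖) := by gcongr; exact norm_add_le x y
    _ ≤ 1 + (‖x‖ + ‖y‖) + ‖x‖ * ‖y‖ := le_add_of_nonneg_right (by positivity)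
    _ = (1 + ‖x‖) * (1 + ‖y‖) := by ring

theorem lintegral_one_add_norm_pow_mul_convolution_sq_le {ι : Type*} [Fintype ι] {v : ℝ≥0}
    (hv : v ≠ 0) {u : EuclideanSpace ℝ ι → ℝ} (hu : AEMeasurable u) (α : ι → ℕ) (k : ℕ) :
    ∫⁻ x, ENNReal.ofReal ((1 + ‖x‖) ^ (2 * k) * (u ⋆ gaussianPartialDeriv v α) x ^ 2) ≤
      (∫⁻ z, ENNReal.ofReal (gaussianPartialDeriv v α z ^ 2 / gaussianPartialDeriv v 0 z)) *
        (∫⁻ z : EuclideanSpace ℝ ι,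
          ENNReal.ofReal ((1 + ‖z‖) ^ (2 * k) * gaussianPartialDeriv v 0 z)) *
        ∫⁻ x, ENNReal.ofReal ((1 + ‖x‖) ^ (2 * k) * u x ^ 2) := by
  let ρ (x : EuclideanSpace ℝ ι) : ℝ≥0∞ := ENNReal.ofReal ((1 + ‖x‖) ^ k)
  have hρ : Measurable ρ := by fun_prop
  have hG (β : ι → ℕ) : Measurable (gaussianPartialDeriv v β) :=
    (continuous_gaussianPartialDeriv v β).measurable
  have kernel_split (z : EuclideanSpace ℝ ι) : (ρ * (‖gaussianPartialDeriv v α ·‖ₑ)) z ^ 2 ≤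
      ENNReal.ofReal (gaussianPartialDeriv v α z ^ 2 / gaussianPartialDeriv v 0 z) *
        ENNReal.ofReal ((1 + ‖z‖) ^ (2 * k) * gaussianPartialDeriv v 0 z) := by
    have hpos := gaussianPartialDeriv_zero_pos hv z
    rw [Pi.mul_apply, ← ofReal_one_add_norm_pow_mul_sq, ← ENNReal.ofReal_mul (by positivity)]
    refine ENNReal.ofReal_le_ofReal (le_of_eq ?_)
    field_simp
  calc ∫⁻ x, ENNReal.ofReal ((1 + ‖x‖) ^ (2 * k) * (u ⋆ gaussianPartialDeriv v α) x ^ 2)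
      = ∫⁻ x, (ρ x * ‖(u ⋆ gaussianPartialDeriv v α) x‖ₑ) ^ 2 := by
        simp_rw [ofReal_one_add_norm_pow_mul_sq, ρ]
    _ ≤ ∫⁻ x, ((ρ * (‖u ·‖ₑ)) ⋆ₗ (ρ * (‖gaussianPartialDeriv v α ·‖ₑ))) x ^ 2 := by
        gcongr with x
        refine le_trans ?_ (mul_lconvolution_le (ofReal_one_add_norm_pow_submultiplicative k) _ _ x)
        gcongr
        exact enorm_convolution_lsmul_le u _ x
    _ ≤ _ := lintegral_lconvolution_sq_le (hρ.aemeasurable.mul hu.enorm)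
        (by fun_prop) (by fun_prop) kernel_split
    _ = _ := by simp_rw [Pi.mul_apply, ofReal_one_add_norm_pow_mul_sq, ρ]

theorem prod_factorial_div_pow_mul_le {ι : Type*} [Fintype ι] [Nonempty ι] {T : ℝ} (hT : 0 < T)
    (α : ι → ℕ) (k : ℕ) :
    (∏ j, (α j)! / (2 * T) ^ α j) * (k ! * (8 * Fintype.card ι * (1 + 2 * T)) ^ k * 2) ≤
      (2 * Fintype.card ι : ℝ) ^ (k + 1) * ((6 : ℝ) ^ k * ((∑ j, α j) + k)!) ^ 2 *
        (1 + T) ^ k / T ^ (∑ j, α j) := by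
  set N := ∑ j, α j
  have one_le_card : (1 : ℝ) ≤ Fintype.card ι := Nat.one_le_cast.2 Fintype.card_pos
  have prod_factorial_le : (∏ j, ((α j)! : ℝ)) ≤ (N + k)! := by
    have h := Nat.le_of_dvd (Nat.factorial_pos _)
      (Nat.prod_factorial_dvd_factorial_sum Finset.univ α)
    exact_mod_cast h.trans (Nat.factorial_le (Nat.le_add_right N k))
  have factorial_le : (k ! : ℝ) ≤ (N + k)! := by
    exact_mod_cast Nat.factorial_le (Nat.le_add_left k N)
  have prod_le : ∏ j, (α j)! / (2 * T) ^ α j ≤ (N + k)! / T ^ N := by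
    rw [Finset.prod_div_distrib, Finset.prod_pow_eq_pow_sum]
    gcongr
    linarith
  have base_le : 8 * Fintype.card ι * (1 + 2 * T) ≤ 2 * Fintype.card ι * 6 ^ 2 * (1 + T) := by
    nlinarith
  have two_le : (2 : ℝ) ≤ 2 * Fintype.card ι := by linarith
  calc (∏ j, (α j)! / (2 * T) ^ α j) * (k ! * (8 * Fintype.card ι * (1 + 2 * T)) ^ k * 2)
      ≤ (N + k)! / T ^ N * ((N + k)! * (2 * Fintype.card ι * 6 ^ 2 * (1 + T)) ^ k *
          (2 * Fintype.card ι)) := by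
        gcongr ?_ * (?_ * ?_ ^ k * ?_)
    _ = _ := by
        simp only [mul_pow, pow_right_comm (6 : ℝ) 2 k]
        ring

end WeightedEstimate

/-- Weighted derivative estimate for the heat equation: for `T > 0`, `α ∈ ℕ^d`, `k ∈ ℕ`
and `u₀ ∈ L²(ℝ^d)` with `∫ (1+|x|)^{2k} |u₀|² dx < ∞`,
`∫ (1+|x|)^{2k} |D^α u(T,x)|² dx
  ≤ (2d)^{k+1} (6^k (|α|+k)!)² (1+T)^k T^{-|α|} ∫ (1+|x|)^{2k} |u₀|² dx`. -/
theorem statement15 (d : ℕ) (hd : 0 < d) (T : ℝ) (hT : 0 < T) (α : Fin d → ℕ) (k : ℕ)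
    (u₀ : EuclideanSpace ℝ (Fin d) → ℝ) (hmem : MemLp u₀ 2 volume)
    (hint : Integrable (fun x => (1 + ‖x‖) ^ (2 * k) * (u₀ x) ^ 2) volume) :
    ∫⁻ x, ENNReal.ofReal
        ((1 + ‖x‖) ^ (2 * k) * (mderiv d α (heatSol d u₀ T) x) ^ 2) ∂volume
      ≤ ENNReal.ofReal
          (((2 * d : ℝ)) ^ (k + 1) *
            ((6 : ℝ) ^ k * (Nat.factorial ((∑ j, α j) + k) : ℝ)) ^ 2 *
            (1 + T) ^ k / T ^ (∑ j, α j) *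
            ∫ x, (1 + ‖x‖) ^ (2 * k) * (u₀ x) ^ 2) := by
  have : Nonempty (Fin d) := Fin.pos_iff_nonempty.1 hd
  have hv : (2 * T).toNNReal ≠ 0 := (Real.toNNReal_pos.2 (by positivity)).ne'
  have hv_coe : ((2 * T).toNNReal : ℝ) = 2 * T := Real.coe_toNNReal _ (by positivity)
  rw [mderiv_heatSol hT hmem]
  refine (lintegral_one_add_norm_pow_mul_convolution_sq_le hv hmem.1.aemeasurable α k).trans ?_
  rw [lintegral_gaussianPartialDeriv_sq_div hv, ← ofReal_integral_eq_lintegral_ofReal hint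
    (.of_forall fun x => by positivity)]
  grw [lintegral_one_add_norm_pow_mul_gaussianPartialDeriv_zero_le hv k]
  rw [← ENNReal.ofReal_mul (by positivity), ← ENNReal.ofReal_mul (by positivity), hv_coe]
  gcongr
  simpa only [Fintype.card_fin] using prod_factorial_div_pow_mul_le hT α k
end
end
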